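/- arXiv:1402.6390 — 3 statements merged into one kernel-verified Lean document; each statement's English description precedes it below -/
import Mathlib

section
/- Let F : B^n → ℂ be a complex-valued function on the open unit ball B^n of ℂ^n. Suppose (i) for every positive integer k there exists an open neighborhood U_k of the origin such that F is of class C^k on U_k, and (ii) for every v ∈ ℂ^n with ‖v‖ = 1 the function ζ ↦ F(ζ·v), defined on the open unit disc in ℂ, is holomorphic in ζ. Then F is holomorphic on B^n. -/
open Metric

open Filter MeasureTheory Real Set Topology
open scoped ContDiff

/-!
Let `P k` be the degree `k` term of the real Taylor series of `F` at the origin. Along every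
complex line through the origin it is the `k`-th Taylor term of a holomorphic function, so
`P k (c • v) = c ^ k • P k v` for complex `c`. A real polynomial with this homogeneity has no
antiholomorphic part, so `P k` is holomorphic, and `F v = ∑ P k v` pointwise on the ball. Cauchy's
estimate on a small disc bounds `P k` by `M * C ^ k`; Hartogs' lemma, applied to the
plurisubharmonic functions `log⁺ ‖P k‖`, improves this to `K * s ^ k` near each point for any
`s > 1`. Homogeneity then turns the bound near a slightly dilated point into geometric decay, and
the series converges locally uniformly.
-/

section

variable {E G : Type*} [NormedAddCommGroup E] [NormedSpace ℂ E]
  [NormedAddCommGroup G] [NormedSpace ℂ G]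

/-! ### The sub-mean value property of `log⁺ ‖f‖` -/

theorem log_norm_le_circleAverage_log_norm {f : ℂ → ℂ} {c : ℂ} {R : ℝ}
    (hf : AnalyticOnNhd ℂ f (closedBall c |R|)) (hfc : f c ≠ 0) :
    log ‖f c‖ ≤ circleAverage (fun z => log ‖f z‖) c R := by
  rcases eq_or_ne R 0 with rfl | hR
  · simp
  rw [hf.circleAverage_log_norm hR hfc]
  refine le_add_of_nonneg_left (finsum_nonneg fun u => ?_)
  by_cases hu : u ∈ closedBall c |R|
  · refine mul_nonneg (mod_cast MeromorphicOn.AnalyticOnNhd.divisor_nonneg hf u) ?_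
    rcases eq_or_ne c u with rfl | huc
    · simp
    have hdist : ‖c - u‖ ≤ |R| := by simpa [dist_eq_norm, norm_sub_rev] using hu
    rw [← log_abs, abs_mul, abs_inv, abs_norm, ← div_eq_mul_inv]
    exact log_nonneg ((one_le_div (norm_pos_iff.2 (sub_ne_zero.2 huc))).2 hdist)
  · simp [hu]

theorem posLog_norm_le_circleAverage_posLog_norm {f : ℂ → G} {c : ℂ} {R : ℝ}
    (hf : AnalyticOnNhd ℂ f (closedBall c |R|)) :
    log⁺ ‖f c‖ ≤ circleAverage (fun z => log⁺ ‖f z‖) c R := by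
  rcases le_or_gt ‖f c‖ 1 with hle | hgt
  · rw [(posLog_eq_zero_iff _).2 (by simpa using hle)]
    exact circleAverage_nonneg_of_nonneg fun _ _ => posLog_nonneg
  obtain ⟨φ, hφ, hφc⟩ := exists_dual_vector'' ℂ (f c)
  have hφf : AnalyticOnNhd ℂ (fun z => φ (f z)) (closedBall c |R|) := φ.comp_analyticOnNhd hf
  have hnorm : ‖φ (f c)‖ = ‖f c‖ := by simp [hφc]
  have hlog (z : ℂ) : log ‖φ (f z)‖ ≤ log⁺ ‖f z‖ :=
    (le_max_right _ _).trans <| posLog_le_posLog (norm_nonneg _) <|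
      (φ.le_of_opNorm_le hφ _).trans_eq (one_mul _)
  have hφint : CircleIntegrable (fun z => log ‖φ (f z)‖) c R :=
    MeromorphicOn.circleIntegrable_log_norm fun z hz =>
      (hφf z (sphere_subset_closedBall hz)).meromorphicAt
  have hint : CircleIntegrable (fun z => log⁺ ‖f z‖) c R :=
    (continuous_posLog.comp_continuousOn
      (hf.continuousOn.mono sphere_subset_closedBall).norm).circleIntegrable'
  calc log⁺ ‖f c‖ = log ‖φ (f c)‖ := by rw [hnorm, posLog_eq_log (by simpa using hgt.le)]
    _ ≤ circleAverage (fun z => log ‖φ (f z)‖) c R :=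
        log_norm_le_circleAverage_log_norm hφf (norm_pos_iff.1 (hnorm ▸ one_pos.trans hgt))
    _ ≤ circleAverage (fun z => log⁺ ‖f z‖) c R :=
        circleAverage_mono hφint hint fun z _ => hlog z

theorem measurePreserving_linearIsometryEquiv {V : Type*} [NormedAddCommGroup V]
    [NormedSpace ℝ V] [FiniteDimensional ℝ V] [MeasurableSpace V] [BorelSpace V]
    (μ : Measure V) [μ.IsAddHaarMeasure] (f : V ≃ₗᵢ[ℝ] V) : MeasurePreserving f μ μ := by
  obtain ⟨c, hc⟩ : ∃ c, ∀ s, μ (f ⁻¹' s) = c * μ s :=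
    ⟨_, μ.addHaar_preimage_continuousLinearEquiv f.toContinuousLinearEquiv⟩
  have hc1 : c = 1 := by
    refine (ENNReal.mul_eq_right (measure_closedBall_pos μ 0 one_pos).ne'
      measure_closedBall_lt_top.ne).1 ((hc (closedBall 0 1)).symm.trans ?_)
    simp
  refine ⟨f.continuous.measurable, Measure.ext fun s hs => ?_⟩
  rw [Measure.map_apply f.continuous.measurable hs, hc, hc1, one_mul]

section Haar

variable [FiniteDimensional ℂ E] [MeasurableSpace E] [BorelSpace E]
  (μ : Measure E) [μ.IsAddHaarMeasure]

theorem measurePreserving_smul_of_norm_eq_one {c : ℂ} (hc : ‖c‖ = 1) :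
    MeasurePreserving (fun w : E => c • w) μ μ := by
  have := FiniteDimensional.complexToReal E
  have hc0 : c ≠ 0 := norm_ne_zero_iff.1 (hc ▸ one_ne_zero)
  exact measurePreserving_linearIsometryEquiv μ
    { (LinearEquiv.smulOfNeZero ℂ E c hc0).restrictScalars ℝ with
      norm_map' w := by
        change ‖c • w‖ = ‖w‖
        rw [norm_smul, hc, one_mul] }

theorem setIntegral_closedBall_smul_of_norm_eq_one {V : Type*} [NormedAddCommGroup V]
    [NormedSpace ℝ V] {c : ℂ} (hc : ‖c‖ = 1) (δ : ℝ) (g : E → V) :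
    ∫ w in closedBall 0 δ, g (c • w) ∂μ = ∫ w in closedBall 0 δ, g w ∂μ := by
  have hc0 : c ≠ 0 := norm_ne_zero_iff.1 (hc ▸ one_ne_zero)
  have hpre : (fun w : E => c • w) ⁻¹' closedBall 0 δ = closedBall 0 δ := by
    ext w
    simp [norm_smul, hc]
  simpa only [hpre] using (measurePreserving_smul_of_norm_eq_one μ hc).setIntegral_preimage_emb
    (Homeomorph.smulOfNeZero c hc0).measurableEmbedding g (closedBall 0 δ)

theorem integrable_uncurry_circleMap_smul {V : Type*} [NormedAddCommGroup V] {g : E → V}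
    {δ : ℝ} (hg : ContinuousOn g (closedBall 0 δ)) :
    Integrable (Function.uncurry fun (θ : ℝ) (w : E) => g (circleMap 0 1 θ • w))
      ((volume.restrict (uIoc 0 (2 * π))).prod (μ.restrict (closedBall 0 δ))) := by
  have := FiniteDimensional.proper ℂ E
  have hcont : ContinuousOn (Function.uncurry fun (θ : ℝ) (w : E) => g (circleMap 0 1 θ • w))
      (Icc 0 (2 * π) ×ˢ closedBall 0 δ) := by
    refine hg.comp (Continuous.continuousOn ?_) fun x hx => ?_
    · exact ((continuous_circleMap 0 1).comp continuous_fst).smul continuous_snd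
    · simpa [norm_smul] using hx.2
  rw [Measure.prod_restrict, uIoc_of_le two_pi_pos.le]
  exact (hcont.integrableOn_compact (isCompact_Icc.prod (isCompact_closedBall 0 δ))).mono_set
    (prod_mono Ioc_subset_Icc_self le_rfl)

theorem integrableOn_circleAverage_smul {V : Type*} [NormedAddCommGroup V] [NormedSpace ℝ V]
    {g : E → V} {δ : ℝ} (hg : ContinuousOn g (closedBall 0 δ)) :
    IntegrableOn (fun w => circleAverage (fun ζ => g (ζ • w)) 0 1) (closedBall 0 δ) μ := by
  simp only [circleAverage_def, intervalIntegral.integral_of_le two_pi_pos.le]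
  have hint := (integrable_uncurry_circleMap_smul μ hg).integral_prod_right
  rw [uIoc_of_le two_pi_pos.le] at hint
  exact hint.smul _

theorem setIntegral_circleAverage_smul {V : Type*} [NormedAddCommGroup V]
    [NormedSpace ℝ V] [CompleteSpace V] {g : E → V} {δ : ℝ} (hg : ContinuousOn g (closedBall 0 δ)) :
    ∫ w in closedBall 0 δ, circleAverage (fun ζ => g (ζ • w)) 0 1 ∂μ =
      ∫ w in closedBall 0 δ, g w ∂μ := by
  calc ∫ w in closedBall 0 δ, circleAverage (fun ζ => g (ζ • w)) 0 1 ∂μ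
      = circleAverage (fun ζ => ∫ w in closedBall 0 δ, g (ζ • w) ∂μ) 0 1 := by
        simp only [circleAverage_def, integral_smul]
        rw [intervalIntegral_integral_swap (integrable_uncurry_circleMap_smul μ hg)]
    _ = ∫ w in closedBall 0 δ, g w ∂μ :=
        circleAverage_const_on_circle fun ζ hζ =>
          setIntegral_closedBall_smul_of_norm_eq_one μ (by simpa using hζ) δ g

theorem measureReal_closedBall_mul_le_setIntegral {g : E → ℝ} {z : E} {δ : ℝ}
    (hg : ContinuousOn g (closedBall z δ))
    (hsub : ∀ w ∈ closedBall 0 δ, g z ≤ circleAverage (fun ζ => g (z + ζ • w)) 0 1) :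
    μ.real (closedBall z δ) * g z ≤ ∫ x in closedBall z δ, g x ∂μ := by
  have := FiniteDimensional.proper ℂ E
  have hpre : (z + ·) ⁻¹' closedBall z δ = closedBall 0 δ := by
    simp [preimage_add_closedBall]
  have hg' : ContinuousOn (fun w => g (z + w)) (closedBall 0 δ) :=
    hg.comp (by fun_prop) fun w hw => by simpa using hw
  calc μ.real (closedBall z δ) * g z = ∫ _w in closedBall 0 δ, g z ∂μ := by
        rw [setIntegral_const, smul_eq_mul, Measure.addHaar_real_closedBall_center]
    _ ≤ ∫ w in closedBall 0 δ, circleAverage (fun ζ => g (z + ζ • w)) 0 1 ∂μ :=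
        setIntegral_mono_on (integrableOn_const measure_closedBall_lt_top.ne)
          (integrableOn_circleAverage_smul μ hg') measurableSet_closedBall hsub
    _ = ∫ w in closedBall 0 δ, g (z + w) ∂μ := setIntegral_circleAverage_smul μ hg'
    _ = ∫ x in closedBall z δ, g x ∂μ := by
        rw [← hpre]
        exact (measurePreserving_add_left μ z).setIntegral_preimage_emb
          (measurableEmbedding_addLeft z) g _

theorem measureReal_closedBall_mul_posLog_norm_le_setIntegral [CompleteSpace G] {f : E → G}
    {U : Set E} (hU : IsOpen U) (hf : DifferentiableOn ℂ f U) {z : E} {δ : ℝ}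
    (hzU : closedBall z δ ⊆ U) :
    μ.real (closedBall z δ) * log⁺ ‖f z‖ ≤ ∫ x in closedBall z δ, log⁺ ‖f x‖ ∂μ := by
  refine measureReal_closedBall_mul_le_setIntegral μ (g := fun x => log⁺ ‖f x‖)
    (continuous_posLog.comp_continuousOn (hf.continuousOn.mono hzU).norm) fun w hw => ?_
  have hslice : DifferentiableOn ℂ (fun ζ : ℂ => f (z + ζ • w)) {ζ | z + ζ • w ∈ U} :=
    hf.comp (by fun_prop) fun _ hζ => hζ
  have hopen : IsOpen {ζ : ℂ | z + ζ • w ∈ U} := hU.preimage (by fun_prop)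
  have hdisc : closedBall (0 : ℂ) |1| ⊆ {ζ : ℂ | z + ζ • w ∈ U} := fun ζ hζ => hzU <| by
    simp only [abs_one, mem_closedBall_zero_iff] at hζ hw
    simpa [norm_smul] using (mul_le_of_le_one_left (norm_nonneg w) hζ).trans hw
  simpa using posLog_norm_le_circleAverage_posLog_norm ((hslice.analyticOnNhd hopen).mono hdisc)

theorem posLog_norm_le_of_measureReal_inter_le [CompleteSpace G] {f : E → G} {U : Set E}
    (hU : IsOpen U) (hf : DifferentiableOn ℂ f U) {z : E} {δ : ℝ} (hδ : 0 < δ)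
    (hzU : closedBall z δ ⊆ U) {S : Set E} (hS : MeasurableSet S) {m T η : ℝ}
    (hm : ∀ x ∉ S, x ∈ closedBall z δ → ‖f x‖ ≤ m) (hT : ∀ x ∈ closedBall z δ, ‖f x‖ ≤ T)
    (hη : μ.real (closedBall z δ ∩ S) ≤ η * μ.real (closedBall z δ)) :
    log⁺ ‖f z‖ ≤ log⁺ m + η * log⁺ T := by
  have := FiniteDimensional.proper ℂ E
  have hfin : μ (closedBall z δ) ≠ ⊤ := measure_closedBall_lt_top.ne
  have hpos : 0 < μ.real (closedBall z δ) :=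
    ENNReal.toReal_pos (measure_closedBall_pos μ z hδ).ne' hfin
  have hcont : ContinuousOn (fun x => log⁺ ‖f x‖) (closedBall z δ) :=
    continuous_posLog.comp_continuousOn (hf.continuousOn.mono hzU).norm
  have hbound : ∀ x ∈ closedBall z δ, log⁺ ‖f x‖ ≤ log⁺ m + S.indicator (fun _ => log⁺ T) x := by
    intro x hx
    by_cases hxS : x ∈ S
    · rw [indicator_of_mem hxS]
      exact (posLog_le_posLog (norm_nonneg _) (hT x hx)).trans
        (le_add_of_nonneg_left posLog_nonneg)
    · rw [indicator_of_notMem hxS, add_zero]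
      exact posLog_le_posLog (norm_nonneg _) (hm x hxS hx)
  have hconst (c : ℝ) : IntegrableOn (fun _ => c) (closedBall z δ) μ := integrableOn_const hfin
  refine le_of_mul_le_mul_left ?_ hpos
  calc μ.real (closedBall z δ) * log⁺ ‖f z‖
      ≤ ∫ x in closedBall z δ, log⁺ ‖f x‖ ∂μ :=
        measureReal_closedBall_mul_posLog_norm_le_setIntegral μ hU hf hzU
    _ ≤ ∫ x in closedBall z δ, (log⁺ m + S.indicator (fun _ => log⁺ T) x) ∂μ :=
        setIntegral_mono_on (hcont.integrableOn_compact (isCompact_closedBall z δ))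
          ((hconst _).add ((hconst _).indicator hS)) measurableSet_closedBall hbound
    _ = μ.real (closedBall z δ) * log⁺ m + μ.real (closedBall z δ ∩ S) * log⁺ T := by
        rw [integral_add (hconst _) ((hconst _).indicator hS), setIntegral_const,
          setIntegral_indicator hS, setIntegral_const, smul_eq_mul, smul_eq_mul]
    _ ≤ μ.real (closedBall z δ) * log⁺ m + η * μ.real (closedBall z δ) * log⁺ T := by
        gcongr
        exact posLog_nonneg
    _ = μ.real (closedBall z δ) * (log⁺ m + η * log⁺ T) := by ring

end Haar

/-! ### Hartogs' lemma and series of homogeneous terms -/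

theorem exists_measure_lt_forall_notMem_le {α ι : Type*} [MeasurableSpace α] (ν : Measure α)
    [IsFiniteMeasure ν] [Countable ι] {f : ι → α → ℝ} (hf : ∀ i, AEMeasurable (f i) ν)
    (hbdd : ∀ᵐ x ∂ν, BddAbove (range fun i => f i x)) {ε : ENNReal} (hε : 0 < ε) :
    ∃ S, MeasurableSet S ∧ ν S < ε ∧ ∃ m : ℝ, ∀ x ∉ S, ∀ i, f i x ≤ m := by
  let bad (m : ℕ) : Set α := ⋃ i, {x | (m : ℝ) < f i x}
  have hmeas (m : ℕ) : NullMeasurableSet (bad m) ν :=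
    .iUnion fun i => nullMeasurableSet_lt aemeasurable_const (hf i)
  have hanti : Antitone bad := fun m m' hm => iUnion_mono fun i x hx =>
    (Nat.cast_le.2 hm).trans_lt (show (m' : ℝ) < f i x from hx)
  have hnull : ν (⋂ m, bad m) = 0 := by
    refine measure_eq_zero_iff_ae_notMem.2 (hbdd.mono fun x ⟨b, hb⟩ hx => ?_)
    obtain ⟨m, hm⟩ := exists_nat_ge b
    obtain ⟨i, hi⟩ := mem_iUnion.1 (mem_iInter.1 hx m)
    exact (hb (mem_range_self i)).not_gt (hm.trans_lt hi)
  have hlim := tendsto_measure_iInter_atTop hmeas hanti ⟨0, measure_ne_top ν _⟩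
  rw [hnull] at hlim
  obtain ⟨m, hm⟩ := (hlim.eventually_lt_const hε).exists
  refine ⟨toMeasurable ν (bad m), measurableSet_toMeasurable _ _,
    (measure_toMeasurable _).trans_lt hm, m, fun x hx i => ?_⟩
  exact not_lt.1 fun hlt => hx (subset_toMeasurable ν _ (mem_iUnion.2 ⟨i, hlt⟩))

section Hartogs

variable [FiniteDimensional ℂ E] [CompleteSpace G] {Ω : Set E} {q : E}

theorem exists_eventually_posLog_norm_le {ι : Type*} [Countable ι] {a : ι → E → G} {T : ι → ℝ}
    (hΩ : IsOpen Ω) (ha : ∀ i, DifferentiableOn ℂ (a i) Ω) (hT : ∀ i, ∀ v ∈ Ω, ‖a i v‖ ≤ T i)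
    (hbdd : ∀ v ∈ Ω, BddAbove (range fun i => ‖a i v‖)) (hq : q ∈ Ω) {η : ℝ} (hη : 0 < η) :
    ∃ A, ∀ᶠ z in 𝓝 q, ∀ i, log⁺ ‖a i z‖ ≤ A + η * log⁺ (T i) := by
  borelize E
  have := FiniteDimensional.proper ℂ E
  let μ : Measure E := Measure.addHaar
  obtain ⟨r, hr, hrΩ⟩ := nhds_basis_closedBall.mem_iff.1 (hΩ.mem_nhds hq)
  have hδ : 0 < r / 2 := half_pos hr
  let B := closedBall q r
  have : IsFiniteMeasure (μ.restrict B) := ⟨by simpa [B] using measure_closedBall_lt_top⟩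
  have hcont (i : ι) : ContinuousOn (fun x => ‖a i x‖) B := ((ha i).continuousOn.mono hrΩ).norm
  obtain ⟨S, hS, hμS, m, hm⟩ := exists_measure_lt_forall_notMem_le (μ.restrict B)
    (fun i => (hcont i).aemeasurable measurableSet_closedBall)
    (ae_restrict_of_forall_mem measurableSet_closedBall fun v hv => hbdd v (hrΩ hv))
    (ENNReal.mul_pos (ENNReal.ofReal_pos.2 hη).ne' (measure_closedBall_pos μ q hδ).ne')
  refine ⟨log⁺ m, ?_⟩
  filter_upwards [closedBall_mem_nhds q hδ] with z hz i
  have hzB : closedBall z (r / 2) ⊆ B :=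
    closedBall_subset_closedBall' (by linarith [mem_closedBall.1 hz])
  refine posLog_norm_le_of_measureReal_inter_le μ hΩ (ha i) hδ (hzB.trans hrΩ) hS
    (fun x hx _ => hm x hx i) (fun x hx => hT i x (hrΩ (hzB hx))) ?_
  have hle : μ (closedBall z (r / 2) ∩ S) ≤ ENNReal.ofReal η * μ (closedBall z (r / 2)) := calc
    μ (closedBall z (r / 2) ∩ S) ≤ μ.restrict B S := by
      rw [Measure.restrict_apply hS, inter_comm S]
      exact measure_mono (inter_subset_inter_left S hzB)
    _ ≤ ENNReal.ofReal η * μ (closedBall q (r / 2)) := hμS.le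
    _ = ENNReal.ofReal η * μ (closedBall z (r / 2)) := by
      rw [μ.addHaar_closedBall_center q, μ.addHaar_closedBall_center z]
  simpa [measureReal_def, ENNReal.toReal_ofReal hη.le] using ENNReal.toReal_mono
    (ENNReal.mul_ne_top ENNReal.ofReal_ne_top measure_closedBall_lt_top.ne) hle

theorem exists_eventually_norm_le_mul_pow {a : ℕ → E → G} {M C s : ℝ} (hΩ : IsOpen Ω)
    (ha : ∀ k, DifferentiableOn ℂ (a k) Ω) (hgrowth : ∀ k, ∀ v ∈ Ω, ‖a k v‖ ≤ M * C ^ k)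
    (hbdd : ∀ v ∈ Ω, BddAbove (range fun k => ‖a k v‖)) (hq : q ∈ Ω) (hs : 1 < s) :
    ∃ K, ∀ᶠ z in 𝓝 q, ∀ k, ‖a k z‖ ≤ K * s ^ k := by
  have hlogs : 0 < log s := log_pos hs
  have hC : 0 ≤ log⁺ C := posLog_nonneg
  let η := log s / (log⁺ C + log s)
  have hη : 0 < η := by positivity
  have hηC : η * log⁺ C ≤ log s := by
    rw [div_mul_eq_mul_div, div_le_iff₀ (by positivity)]
    gcongr
    linarith
  obtain ⟨A, hA⟩ := exists_eventually_posLog_norm_le hΩ ha hgrowth hbdd hq hη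
  refine ⟨exp (A + η * log⁺ M), hA.mono fun z hz k => ?_⟩
  have hposLog : log⁺ ‖a k z‖ ≤ A + η * log⁺ M + k * log s := calc
    log⁺ ‖a k z‖ ≤ A + η * log⁺ (M * C ^ k) := hz k
    _ ≤ A + η * (log⁺ M + k * log⁺ C) := by
      gcongr
      exact posLog_mul.trans_eq (by rw [posLog_pow])
    _ = A + η * log⁺ M + k * (η * log⁺ C) := by ring
    _ ≤ A + η * log⁺ M + k * log s := by gcongr
  calc ‖a k z‖ ≤ exp (log⁺ ‖a k z‖) := le_exp_log _ |>.trans (exp_le_exp.2 (le_max_right _ _))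
    _ ≤ exp (A + η * log⁺ M + k * log s) := exp_le_exp.2 hposLog
    _ = exp (A + η * log⁺ M) * s ^ k := by
      rw [exp_add, ← log_pow, exp_log (by positivity)]

theorem exists_eventually_norm_le_geometric {a : ℕ → E → G} {M C : ℝ} (hΩ : IsOpen Ω)
    (ha : ∀ k, DifferentiableOn ℂ (a k) Ω) (hhom : ∀ k (c : ℂ) v, a k (c • v) = c ^ k • a k v)
    (hgrowth : ∀ k, ∀ v ∈ Ω, ‖a k v‖ ≤ M * C ^ k)
    (hbdd : ∀ v ∈ Ω, BddAbove (range fun k => ‖a k v‖)) (hq : q ∈ Ω) :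
    ∃ K, ∃ ρ ∈ Ico (0 : ℝ) 1, ∀ᶠ z in 𝓝 q, ∀ k, ‖a k z‖ ≤ K * ρ ^ k := by
  obtain ⟨S, hSΩ, hS⟩ : ∃ S : ℝ, (S : ℂ) • q ∈ Ω ∧ 1 < S := by
    have hmem : ∀ᶠ S : ℝ in 𝓝 1, (S : ℂ) • q ∈ Ω :=
      (Continuous.tendsto (by fun_prop) 1).eventually (hΩ.mem_nhds (by simpa using hq))
    exact ((hmem.filter_mono nhdsWithin_le_nhds).and (self_mem_nhdsWithin (s := Ioi 1))).exists
  obtain ⟨s, hs, hsS⟩ := exists_between hS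
  obtain ⟨K, hK⟩ := exists_eventually_norm_le_mul_pow hΩ ha hgrowth hbdd hSΩ hs
  have hKS : ∀ᶠ z in 𝓝 q, ∀ k, ‖a k ((S : ℂ) • z)‖ ≤ K * s ^ k :=
    (continuous_const_smul (S : ℂ)).continuousAt.eventually hK
  refine ⟨K, s / S, ⟨by positivity, (div_lt_one (by positivity)).2 hsS⟩, hKS.mono fun z hz k => ?_⟩
  have hSk := hz k
  rw [hhom, norm_smul, norm_pow, Complex.norm_real, norm_of_nonneg (by positivity)] at hSk
  rwa [div_pow, ← mul_div_assoc, le_div_iff₀ (by positivity), mul_comm]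

end Hartogs

theorem differentiableOn_tsum_of_summable_norm_le [CompleteSpace G] {ι : Type*} {f : ι → E → G}
    {u : ι → ℝ} {U : Set E} (hu : Summable u) (hU : IsOpen U)
    (hf : ∀ i, DifferentiableOn ℂ (f i) U) (hfu : ∀ i, ∀ z ∈ U, ‖f i z‖ ≤ u i) :
    DifferentiableOn ℂ (fun z => ∑' i, f i z) U := by
  intro p hp
  obtain ⟨r, hr, hrU⟩ := Metric.isOpen_iff.1 hU p hp
  have hδ : 0 < r / 2 := half_pos hr
  have hfderiv (i : ι) (x : E) (hx : x ∈ ball p (r / 2)) :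
      ‖fderiv ℂ (f i) x‖ ≤ 2 * u i / (r / 2) := by
    have hxU : ball x (r / 2) ⊆ U :=
      (ball_subset_ball' (by linarith [mem_ball.1 hx])).trans hrU
    refine Complex.norm_fderiv_le_div_of_mapsTo_ball ((hf i).mono hxU) (fun y hy => ?_) hδ
    rw [mem_closedBall, dist_eq_norm]
    linarith [norm_sub_le (f i y) (f i x), hfu i y (hxU hy), hfu i x (hxU (mem_ball_self hδ))]
  have hhalf : ball p (r / 2) ⊆ U := (ball_subset_ball (by linarith)).trans hrU
  have hpδ : p ∈ ball p (r / 2) := mem_ball_self hδ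
  exact (hasFDerivAt_tsum_of_isPreconnected ((hu.mul_left 2).div_const _) isOpen_ball
    (convex_ball p (r / 2)).isPreconnected
    (fun i x hx => ((hf i).differentiableAt (hU.mem_nhds (hhalf hx))).hasFDerivAt) hfderiv hpδ
    (hu.of_norm_bounded fun i => hfu i p hp) hpδ).differentiableAt.differentiableWithinAt

theorem differentiableOn_of_hasSum_homogeneous [FiniteDimensional ℂ E] [CompleteSpace G]
    {a : ℕ → E → G} {F : E → G} {Ω : Set E} {M C : ℝ} (hΩ : IsOpen Ω)
    (ha : ∀ k, DifferentiableOn ℂ (a k) Ω)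
    (hhom : ∀ k (c : ℂ) v, a k (c • v) = c ^ k • a k v)
    (hgrowth : ∀ k, ∀ v ∈ Ω, ‖a k v‖ ≤ M * C ^ k)
    (hsum : ∀ v ∈ Ω, HasSum (fun k => a k v) (F v)) : DifferentiableOn ℂ F Ω := by
  intro p hp
  have hbdd : ∀ v ∈ Ω, BddAbove (range fun k => ‖a k v‖) := fun v hv =>
    (hsum v hv).summable.tendsto_atTop_zero.norm.bddAbove_range
  obtain ⟨K, ρ, hρ, hgeom⟩ := exists_eventually_norm_le_geometric hΩ ha hhom hgrowth hbdd hp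
  obtain ⟨U, hUsub, hU, hpU⟩ := _root_.mem_nhds_iff.1 (inter_mem (hΩ.mem_nhds hp) hgeom)
  have htsum := differentiableOn_tsum_of_summable_norm_le
    ((summable_geometric_of_lt_one hρ.1 hρ.2).mul_left K) hU
    (fun k => (ha k).mono fun z hz => (hUsub hz).1) fun k z hz => (hUsub hz).2 k
  have hF : DifferentiableOn ℂ F U := htsum.congr fun z hz => (hsum z (hUsub hz).1).tsum_eq.symm
  exact (hF.differentiableAt (hU.mem_nhds hpU)).differentiableWithinAt

/-! ### Complex homogeneous real polynomials -/

theorem differentiableAt_complex_of_map_I_smul {f : E → G} {f' : E →L[ℝ] G} {v : E}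
    (hf : HasFDerivAt f f' v) (hI : ∀ h, f' (Complex.I • h) = Complex.I • f' h) :
    DifferentiableAt ℂ f v := by
  have hsmul (c : ℂ) (h : E) : f' (c • h) = c • f' h := by
    have hline := real_linearMap_map_smul_complex
      (ℓ := (f' : E →ₗ[ℝ] G) ∘ₗ (LinearMap.toSpanSingleton ℂ E h).restrictScalars ℝ)
      (by simp [hI]) c 1
    simpa using hline
  rw [differentiableAt_iff_restrictScalars ℝ hf.differentiableAt, hf.fderiv]
  exact ⟨{ f' with map_smul' := hsmul }, rfl⟩

theorem eq_of_forall_ofReal_eq [CompleteSpace G] {f g : ℂ → G} (hf : Differentiable ℂ f)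
    (hg : Differentiable ℂ g) (hfg : ∀ t : ℝ, f t = g t) : f = g := by
  have hmap : Tendsto ((↑) : ℝ → ℂ) (𝓝[≠] 0) (𝓝[≠] 0) := by
    refine tendsto_nhdsWithin_iff.2 ⟨?_, eventually_mem_nhdsWithin.mono fun t ht => ?_⟩
    · exact (Complex.continuous_ofReal.tendsto' 0 0 Complex.ofReal_zero).mono_left
        nhdsWithin_le_nhds
    · simpa using ht
  exact AnalyticOnNhd.eq_of_frequently_eq (fun z _ => hf.analyticAt z)
    (fun z _ => hg.analyticAt z) (hmap.frequently (Frequently.of_forall hfg))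

section Multilinear

variable {ι : Type*} {M : ι → Type*} [∀ i, AddCommGroup (M i)] [∀ i, Module ℝ (M i)]

theorem exists_differentiable_ofReal_eq_map_add_smul [Finite ι] (f : MultilinearMap ℝ M G)
    (x y : ∀ i, M i) : ∃ q : ℂ → G, Differentiable ℂ q ∧ ∀ t : ℝ, q t = f (x + t • y) := by
  classical
  have := Fintype.ofFinite ι
  refine ⟨fun z => ∑ s : Finset ι, z ^ sᶜ.card • f (s.piecewise x y), by fun_prop, fun t => ?_⟩
  rw [f.map_add_univ]
  refine Finset.sum_congr rfl fun s _ => ?_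
  have hpiecewise : s.piecewise x (t • y) =
      sᶜ.piecewise (fun i => t • s.piecewise x y i) (s.piecewise x y) := by
    ext i
    by_cases hi : i ∈ s <;> simp [hi]
  rw [hpiecewise, f.map_piecewise_smul (fun _ => t), Finset.prod_const, ← Complex.ofReal_pow,
    Complex.coe_smul]

theorem exists_differentiable_ofReal_eq_linearDeriv_add_smul [Fintype ι] [DecidableEq ι]
    (f : MultilinearMap ℝ M G) (x y h : ∀ i, M i) :
    ∃ q : ℂ → G, Differentiable ℂ q ∧ ∀ t : ℝ, q t = f.linearDeriv (x + t • y) h := by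
  choose q hq hqt using fun i => exists_differentiable_ofReal_eq_map_add_smul f
    (Function.update x i (h i)) (Function.update y i 0)
  refine ⟨fun z => ∑ i, q i z, by fun_prop, fun t => ?_⟩
  rw [f.linearDeriv_apply]
  refine Finset.sum_congr rfl fun i _ => ?_
  rw [hqt, ← Function.update_smul, ← Function.update_add, smul_zero, add_zero]

end Multilinear

section Homogeneous

variable {k : ℕ} {Q : E → G}

theorem fderiv_smul_smul_of_homogeneous (hQ : Differentiable ℝ Q)
    (hhom : ∀ (c : ℂ) v, Q (c • v) = c ^ k • Q v) (c : ℂ) (v h : E) :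
    fderiv ℝ Q (c • v) (c • h) = c ^ k • fderiv ℝ Q v h := by
  have hmul : HasFDerivAt (fun v : E => c • v) (c • ContinuousLinearMap.id ℝ E) v :=
    (hasFDerivAt_id v).const_smul c
  have hcomp := (hQ (c • v)).hasFDerivAt.comp v hmul
  have hsmul := (hQ v).hasFDerivAt.const_smul (c ^ k)
  rw [show Q ∘ (fun v => c • v) = fun v => c ^ k • Q v from funext (hhom c)] at hcomp
  simpa using DFunLike.congr_fun (hcomp.unique hsmul) h

theorem fderiv_I_smul_of_homogeneous [CompleteSpace G] (hQ : Differentiable ℝ Q)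
    (hhom : ∀ (c : ℂ) v, Q (c • v) = c ^ k • Q v)
    (hext : ∀ v w h, ∃ q : ℂ → G, Differentiable ℂ q ∧ ∀ t : ℝ, q t = fderiv ℝ Q (v + t • w) h)
    (v h : E) : fderiv ℝ Q v (Complex.I • h) = Complex.I • fderiv ℝ Q v h := by
  obtain ⟨q, hq, hqt⟩ := hext v (Complex.I • v) h
  obtain ⟨q', hq', hqt'⟩ := hext v (Complex.I • v) (Complex.I • h)
  let dbar : G := fderiv ℝ Q v (Complex.I • h) - Complex.I • fderiv ℝ Q v h
  have hreal (t : ℝ) : (1 - Complex.I * t) • (q' t - Complex.I • q t) =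
      (1 + Complex.I * t) ^ k • dbar := by
    have hline (x : E) : (1 + Complex.I * t) • x = x + t • Complex.I • x := by
      rw [← Complex.coe_smul]
      module
    have hh := fderiv_smul_smul_of_homogeneous hQ hhom (1 + Complex.I * t) v h
    have hIh := fderiv_smul_smul_of_homogeneous hQ hhom (1 + Complex.I * t) v (Complex.I • h)
    rw [hline v, hline, map_add, map_smul, ← hqt, ← hqt'] at hh
    rw [hline v, hline, smul_smul Complex.I, Complex.I_mul_I, neg_one_smul, smul_neg, map_add,
      map_neg, ContinuousLinearMap.map_smul, ← hqt, ← hqt'] at hIh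
    rw [smul_sub ((1 + Complex.I * t) ^ k), smul_comm _ Complex.I, ← hh, ← hIh,
      ← Complex.coe_smul, ← Complex.coe_smul]
    match_scalars
    · ring
    · linear_combination (t : ℂ) * Complex.I_mul_I
  have hentire : (fun z => (1 - Complex.I * z) • (q' z - Complex.I • q z)) =
      fun z => (1 + Complex.I * z) ^ k • dbar :=
    eq_of_forall_ofReal_eq (by fun_prop) (by fun_prop) hreal
  -- At `z = -I` the factor `1 - I * z` vanishes, whereas `1 + I * z = 2`.
  have hdbar : dbar = 0 := by
    simpa [one_add_one_eq_two] using (congr_fun hentire (-Complex.I)).symm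
  exact sub_eq_zero.1 hdbar

theorem differentiable_of_homogeneous [CompleteSpace G]
    (P : ContinuousMultilinearMap ℝ (fun _ : Fin k => E) G)
    (hhom : ∀ (c : ℂ) v, P (fun _ => c • v) = c ^ k • P fun _ => v) :
    Differentiable ℂ fun v => P fun _ => v := by
  have hderiv (v : E) : HasFDerivAt (fun v => P fun _ => v)
      ((P.linearDeriv fun _ => v) ∘L .pi fun _ => .id ℝ E) v :=
    (P.hasFDerivAt fun _ => v).comp v (hasFDerivAt_pi.2 fun _ => hasFDerivAt_id v)
  have hreal : Differentiable ℝ fun v => P fun _ => v := fun v => (hderiv v).differentiableAt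
  refine fun v => differentiableAt_complex_of_map_I_smul (hreal v).hasFDerivAt
    (fderiv_I_smul_of_homogeneous hreal hhom (fun v w h => ?_) v)
  obtain ⟨q, hq, hqt⟩ := exists_differentiable_ofReal_eq_linearDeriv_add_smul P.toMultilinearMap
    (fun _ => v) (fun _ => w) fun _ => h
  refine ⟨q, hq, fun t => ?_⟩
  rw [hqt, (hderiv _).fderiv]
  simp [MultilinearMap.linearDeriv_apply, ContinuousMultilinearMap.linearDeriv_apply, Pi.add_def]

end Homogeneous

/-! ### Taylor terms along complex lines -/

section Slices

variable {F : E → G}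

theorem differentiableOn_slice_of_mul_norm_le_one
    (hslice : ∀ v, ‖v‖ = 1 → DifferentiableOn ℂ (fun ζ : ℂ => F (ζ • v)) (ball 0 1))
    {v : E} {R : ℝ} (hR : R * ‖v‖ ≤ 1) :
    DifferentiableOn ℂ (fun ζ : ℂ => F (ζ • v)) (ball 0 R) := by
  rcases eq_or_ne v 0 with rfl | hv
  · simp
  have hv0 : 0 < ‖v‖ := norm_pos_iff.2 hv
  have hmaps : MapsTo (fun ζ : ℂ => ζ * (‖v‖ : ℂ)) (ball 0 R) (ball 0 1) := fun ζ hζ => by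
    rw [mem_ball_zero_iff] at hζ ⊢
    rw [norm_mul, Complex.norm_real, norm_norm]
    exact (mul_lt_mul_of_pos_right hζ hv0).trans_le hR
  refine ((hslice ((‖v‖ : ℂ)⁻¹ • v) ?_).comp (by fun_prop) hmaps).congr fun ζ _ => ?_
  · rw [norm_smul, norm_inv, Complex.norm_real, norm_norm, inv_mul_cancel₀ hv0.ne']
  · simp [smul_smul, hv]

theorem iteratedFDeriv_comp_right_of_contDiffAt {𝕜 V W X : Type*} [NontriviallyNormedField 𝕜]
    [NormedAddCommGroup V] [NormedSpace 𝕜 V] [NormedAddCommGroup W] [NormedSpace 𝕜 W]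
    [NormedAddCommGroup X] [NormedSpace 𝕜 X] (g : V →L[𝕜] W) {f : W → X} {x : V} {k : ℕ}
    (hf : ContDiffAt 𝕜 k f (g x)) :
    iteratedFDeriv 𝕜 k (f ∘ g) x =
      (iteratedFDeriv 𝕜 k f (g x)).compContinuousLinearMap fun _ => g := by
  obtain ⟨U, hU, hxU, hfU⟩ := hf.contDiffOn' le_rfl (by simp)
  rw [insert_eq_of_mem (mem_univ _), univ_inter] at hfU
  have hpre : IsOpen (g ⁻¹' U) := hU.preimage g.continuous
  rw [← iteratedFDerivWithin_of_isOpen k hpre hxU, ← iteratedFDerivWithin_of_isOpen k hU hxU]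
  exact g.iteratedFDerivWithin_comp_right hfU hU.uniqueDiffOn hpre.uniqueDiffOn hxU le_rfl

theorem iteratedFDeriv_zero_smul_eq_iteratedDeriv_slice {k : ℕ} {v : E}
    (hF : ContDiffAt ℝ k F 0) (hslice : ContDiffAt ℂ k (fun ζ : ℂ => F (ζ • v)) 0) (c : ℂ) :
    iteratedFDeriv ℝ k F 0 (fun _ => c • v) =
      c ^ k • iteratedDeriv k (fun ζ : ℂ => F (ζ • v)) 0 := by
  let line : ℂ →L[ℝ] E := (ContinuousLinearMap.toSpanSingleton ℂ v).restrictScalars ℝ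
  have hline : line 0 = 0 := map_zero line
  calc iteratedFDeriv ℝ k F 0 (fun _ => c • v)
      = iteratedFDeriv ℝ k (F ∘ line) 0 fun _ => c := by
        rw [iteratedFDeriv_comp_right_of_contDiffAt line (hline ▸ hF), hline]
        rfl
    _ = iteratedFDeriv ℂ k (fun ζ : ℂ => F (ζ • v)) 0 fun _ => c :=
        (DFunLike.congr_fun (hslice.restrictScalars_iteratedFDeriv (𝕜 := ℝ)) fun _ => c).symm
    _ = c ^ k • iteratedDeriv k (fun ζ : ℂ => F (ζ • v)) 0 := by
        rw [iteratedDeriv_eq_iteratedFDeriv]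
        simpa using (iteratedFDeriv ℂ k (fun ζ : ℂ => F (ζ • v)) 0).map_smul_univ
          (fun _ => c) fun _ => 1

end Slices

/-- The degree `k` term `v ↦ (1 / k!) DᵏF(0)(v, …, v)` of the real Taylor series of `F` at the
origin. The coefficient is a complex scalar so that the term can be compared with complex Taylor
series along complex lines. -/
noncomputable def homogeneousTaylorTerm (F : E → G) (k : ℕ) (v : E) : G :=
  (k.factorial : ℂ)⁻¹ • iteratedFDeriv ℝ k F 0 fun _ => v

section TaylorTerm

variable [CompleteSpace G] {F : E → G} {v : E}

theorem homogeneousTaylorTerm_smul_eq_iteratedDeriv (hF : ContDiffAt ℝ ∞ F 0)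
    (hslice : AnalyticAt ℂ (fun ζ : ℂ => F (ζ • v)) 0) (k : ℕ) (c : ℂ) :
    homogeneousTaylorTerm F k (c • v) =
      c ^ k • (k.factorial : ℂ)⁻¹ • iteratedDeriv k (fun ζ : ℂ => F (ζ • v)) 0 := by
  rw [homogeneousTaylorTerm, iteratedFDeriv_zero_smul_eq_iteratedDeriv_slice
    (contDiffAt_infty.1 hF k) hslice.contDiffAt, smul_comm]

theorem homogeneousTaylorTerm_eq_iteratedDeriv (hF : ContDiffAt ℝ ∞ F 0)
    (hslice : AnalyticAt ℂ (fun ζ : ℂ => F (ζ • v)) 0) (k : ℕ) :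
    homogeneousTaylorTerm F k v =
      (k.factorial : ℂ)⁻¹ • iteratedDeriv k (fun ζ : ℂ => F (ζ • v)) 0 := by
  simpa using homogeneousTaylorTerm_smul_eq_iteratedDeriv hF hslice k 1

theorem homogeneousTaylorTerm_smul (hF : ContDiffAt ℝ ∞ F 0)
    (hslice : AnalyticAt ℂ (fun ζ : ℂ => F (ζ • v)) 0) (k : ℕ) (c : ℂ) :
    homogeneousTaylorTerm F k (c • v) = c ^ k • homogeneousTaylorTerm F k v := by
  rw [homogeneousTaylorTerm_smul_eq_iteratedDeriv hF hslice,
    homogeneousTaylorTerm_eq_iteratedDeriv hF hslice]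

theorem differentiable_homogeneousTaylorTerm (hF : ContDiffAt ℝ ∞ F 0)
    (hslice : ∀ v, AnalyticAt ℂ (fun ζ : ℂ => F (ζ • v)) 0) (k : ℕ) :
    Differentiable ℂ (homogeneousTaylorTerm F k) := by
  refine (differentiable_of_homogeneous (iteratedFDeriv ℝ k F 0) fun c v => ?_).const_smul _
  have hk : (k.factorial : ℂ)⁻¹ ≠ 0 := by simp [k.factorial_ne_zero]
  have hsmul := homogeneousTaylorTerm_smul hF (hslice v) k c
  rw [homogeneousTaylorTerm, homogeneousTaylorTerm, smul_comm] at hsmul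
  exact smul_right_injective G hk hsmul

theorem hasSum_homogeneousTaylorTerm (hF : ContDiffAt ℝ ∞ F 0) {R : ℝ} (hR : 1 < R)
    (hslice : DifferentiableOn ℂ (fun ζ : ℂ => F (ζ • v)) (ball 0 R)) :
    HasSum (fun k => homogeneousTaylorTerm F k v) (F v) := by
  have han : AnalyticAt ℂ (fun ζ : ℂ => F (ζ • v)) 0 :=
    hslice.analyticAt (ball_mem_nhds 0 (by positivity))
  have hone : (1 : ℂ) ∈ ball (0 : ℂ) R := by simpa using hR
  simpa [homogeneousTaylorTerm_eq_iteratedDeriv hF han] using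
    Complex.hasSum_taylorSeries_on_ball hslice hone

theorem norm_homogeneousTaylorTerm_le (hF : ContDiffAt ℝ ∞ F 0) {r M : ℝ} (hr : 0 < r)
    (hslice : DiffContOnCl ℂ (fun ζ : ℂ => F (ζ • v)) (ball 0 r))
    (hM : ∀ ζ ∈ sphere (0 : ℂ) r, ‖F (ζ • v)‖ ≤ M) (k : ℕ) :
    ‖homogeneousTaylorTerm F k v‖ ≤ M * r⁻¹ ^ k := by
  have han : AnalyticAt ℂ (fun ζ : ℂ => F (ζ • v)) 0 :=
    hslice.differentiableOn.analyticAt (ball_mem_nhds 0 hr)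
  have hcauchy := Complex.norm_iteratedDeriv_le_of_forall_mem_sphere_norm_le k hr hslice hM
  rw [homogeneousTaylorTerm_eq_iteratedDeriv hF han, norm_smul, norm_inv, Complex.norm_natCast,
    inv_mul_le_iff₀ (by positivity), inv_pow, ← div_eq_mul_inv, ← mul_div_assoc]
  exact hcauchy

theorem exists_forall_norm_homogeneousTaylorTerm_le (hF : ContDiffAt ℝ ∞ F 0)
    (hslice : ∀ v ∈ ball (0 : E) 1, DifferentiableOn ℂ (fun ζ : ℂ => F (ζ • v)) (ball 0 1)) :
    ∃ M C : ℝ, ∀ k, ∀ v ∈ ball (0 : E) 1, ‖homogeneousTaylorTerm F k v‖ ≤ M * C ^ k := by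
  have hbdd : ∀ᶠ v in 𝓝 (0 : E), ‖F v‖ < ‖F 0‖ + 1 :=
    hF.continuousAt.norm.eventually_lt_const (lt_add_one _)
  obtain ⟨ε, hε, hball⟩ := nhds_basis_closedBall.mem_iff.1 hbdd
  obtain ⟨r, hr, hrlt⟩ := exists_between (lt_min hε one_pos)
  obtain ⟨hrε, hr1⟩ := lt_min_iff.1 hrlt
  refine ⟨‖F 0‖ + 1, r⁻¹, fun k v hv => norm_homogeneousTaylorTerm_le hF hr
    ((hslice v hv).diffContOnCl_ball (closedBall_subset_ball hr1)) (fun ζ hζ => ?_) k⟩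
  have hζv : ‖ζ • v‖ ≤ ε := by
    rw [norm_smul, mem_sphere_zero_iff_norm.1 hζ]
    exact (mul_le_of_le_one_right hr.le (mem_ball_zero_iff.1 hv).le).trans hrε.le
  exact (hball (mem_closedBall_zero_iff.2 hζv) : ‖F (ζ • v)‖ < ‖F 0‖ + 1).le

end TaylorTerm

theorem forelli_theorem_general [FiniteDimensional ℂ E] [CompleteSpace G] (F : E → G)
    (hsmooth : ContDiffAt ℝ ∞ F 0)
    (hslice : ∀ v, ‖v‖ = 1 → DifferentiableOn ℂ (fun ζ : ℂ => F (ζ • v)) (ball 0 1)) :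
    DifferentiableOn ℂ F (ball 0 1) := by
  have hslices {v : E} {R : ℝ} (hR : R * ‖v‖ ≤ 1) :
      DifferentiableOn ℂ (fun ζ : ℂ => F (ζ • v)) (ball 0 R) :=
    differentiableOn_slice_of_mul_norm_le_one hslice hR
  have hanalytic (v : E) : AnalyticAt ℂ (fun ζ : ℂ => F (ζ • v)) 0 := by
    have hR : 0 < (‖v‖ + 1)⁻¹ := by positivity
    refine (hslices ?_).analyticAt (ball_mem_nhds 0 hR)
    rw [inv_mul_le_iff₀ (by positivity)]
    linarith
  obtain ⟨M, C, hgrowth⟩ := exists_forall_norm_homogeneousTaylorTerm_le hsmooth fun v hv =>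
    hslices (by simpa using (mem_ball_zero_iff.1 hv).le)
  refine differentiableOn_of_hasSum_homogeneous isOpen_ball
    (fun k => (differentiable_homogeneousTaylorTerm hsmooth hanalytic k).differentiableOn)
    (fun k c v => homogeneousTaylorTerm_smul hsmooth (hanalytic v) k c) hgrowth fun v hv => ?_
  obtain ⟨R, hRv, hR⟩ : ∃ R : ℝ, R * ‖v‖ < 1 ∧ 1 < R := by
    have hmem : ∀ᶠ R : ℝ in 𝓝 1, R * ‖v‖ < 1 :=
      (continuous_mul_const ‖v‖).continuousAt.eventually_lt_const (by simpa using hv)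
    exact ((hmem.filter_mono nhdsWithin_le_nhds).and (self_mem_nhdsWithin (s := Ioi 1))).exists
  exact hasSum_homogeneousTaylorTerm hsmooth hR (hslices hRv.le)

end

/-- **Forelli's theorem** (Forelli 1977, Stoll 1980). If `F` is `C^k` near the origin for
every `k` and holomorphic along every radial complex line, then `F` is holomorphic on the
unit ball of `ℂ^n`. -/
theorem forelli_theorem (n : ℕ) (F : EuclideanSpace ℂ (Fin n) → ℂ)
    (hsmooth : ∀ k : ℕ, 0 < k → ∃ U : Set (EuclideanSpace ℂ (Fin n)),
      IsOpen U ∧ (0 : EuclideanSpace ℂ (Fin n)) ∈ U ∧ ContDiffOn ℝ k F U)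
    (hslice : ∀ v : EuclideanSpace ℂ (Fin n), ‖v‖ = 1 →
      DifferentiableOn ℂ (fun ζ : ℂ => F (ζ • v)) (ball (0 : ℂ) 1)) :
    DifferentiableOn ℂ F (ball (0 : EuclideanSpace ℂ (Fin n)) 1) := by
  refine forelli_theorem_general F (contDiffAt_infty.2 fun k => ?_) hslice
  obtain ⟨U, hU, h0, hF⟩ := hsmooth (k + 1) k.succ_pos
  exact (hF.contDiffAt (hU.mem_nhds h0)).of_le (mod_cast k.le_succ)
end

section
/- Let λ_1, …, λ_n be complex numbers with Re λ_j > 0 for every j, and for each j let g_j be a polynomial in z_1,…,z_{j−1} only with zero constant term, so that X = Σ_{j=1}^n (λ_j z_j + g_j(z_1,…,z_{j−1})) ∂/∂z_j is a holomorphic vector field contracting at the origin. If f : B^n → ℂ is real-analytic and satisfies X̄f = 0 at every point of B^n, i.e. Σ_{j=1}^n conj(λ_j z_j + g_j(z)) · (∂f/∂z̄_j)(z) = 0 for all z ∈ B^n, then f is holomorphic on B^n. -/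
open Metric

/-!
The field `X̄` is the diagonal field `∑ j, conj (λ j) * z̄ j * ∂/∂z̄ j` plus a triangular remainder.
On the Taylor coefficients of `f` at the origin, taken in `z` and `z̄`, the diagonal part multiplies
a coefficient by the sum of the `conj (λ j)` over the variables `z̄ j` that occur in its monomial,
counted with multiplicity; as soon as there is one, this factor has positive real part. If the
earlier variables `z̄ j` are given larger weights (and every `z j` weight zero), the remainder
strictly raises the weight of a monomial. Comparing coefficients in `X̄ f = 0` by induction on the
weight, all coefficients of monomials containing some `z̄ j` vanish, so each `∂f/∂z̄ j` has zero
Taylor series at the origin and vanishes identically by the identity theorem.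
-/

namespace Forelli

section WordDerivative

variable {R A σ : Type*} [CommRing R] [CommRing A] [Algebra R A]
  (D : σ → Derivation R A A) (ε : A →ₐ[R] R)

/-- The composite `D l₁ ∘ ⋯ ∘ D lₖ` of derivations along the word `[l₁, …, lₖ]`; its values under a
character `ε` play the role of Taylor coefficients. -/
def wordDeriv (T : List σ) : Module.End R A :=
  (T.map fun l ↦ (D l : Module.End R A)).prod

@[simp]
theorem wordDeriv_nil : wordDeriv D [] = 1 := rfl

@[simp]
theorem wordDeriv_append_singleton_apply (T : List σ) (l : σ) (a : A) :
    wordDeriv D (T ++ [l]) a = wordDeriv D T (D l a) := by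
  simp [wordDeriv]

variable {D ε} {w : σ → ℕ}

theorem apply_wordDeriv_mul_eq_zero {M N : ℕ} {a b : A}
    (ha : ∀ T : List σ, (T.map w).sum < M → ε (wordDeriv D T a) = 0)
    (hb : ∀ T : List σ, (T.map w).sum < N → ε (wordDeriv D T b) = 0)
    (T : List σ) (hT : (T.map w).sum < M + N) : ε (wordDeriv D T (a * b)) = 0 := by
  induction T using List.reverseRecOn generalizing a b M N with
  | nil =>
    obtain hM | hN : 0 < M ∨ 0 < N := by simpa [Nat.pos_iff_ne_zero, or_iff_not_imp_left] using hT
    · simp [show ε a = 0 from ha [] hM]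
    · simp [show ε b = 0 from hb [] hN]
  | append_singleton T l ih =>
    have shift {K : ℕ} {c : A}
        (hc : ∀ S : List σ, (S.map w).sum < K → ε (wordDeriv D S c) = 0) (S : List σ)
        (hS : (S.map w).sum < K - w l) : ε (wordDeriv D S (D l c)) = 0 := by
      have hSl : ((S ++ [l]).map w).sum < K := by
        simpa using Nat.add_lt_of_lt_sub hS
      simpa using hc (S ++ [l]) hSl
    simp only [List.map_append, List.map_cons, List.map_nil, List.sum_append, List.sum_cons,
      List.sum_nil, add_zero] at hT
    have hab := ih ha (shift hb) (by omega)
    have hba := ih hb (shift ha) (by omega)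
    simp [hab, hba]

variable (D ε w) in
/-- The ideal of elements whose weighted order of vanishing at the character `ε` is at least `M`:
all word derivatives of weight less than `M` vanish there, the letter `l` having weight `w l`. -/
def vanishingIdeal (M : ℕ) : Ideal A where
  carrier := {a | ∀ T : List σ, (T.map w).sum < M → ε (wordDeriv D T a) = 0}
  zero_mem' := by simp
  add_mem' ha hb T hT := by simp [ha T hT, hb T hT]
  smul_mem' c a ha T hT :=
    apply_wordDeriv_mul_eq_zero (M := 0) (fun _ h ↦ absurd h (Nat.not_lt_zero _)) ha T
      (by simpa using hT)

theorem mul_mem_vanishingIdeal_add {M N : ℕ} {a b : A} (ha : a ∈ vanishingIdeal D ε w M)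
    (hb : b ∈ vanishingIdeal D ε w N) : a * b ∈ vanishingIdeal D ε w (M + N) :=
  apply_wordDeriv_mul_eq_zero ha hb

theorem vanishingIdeal_antitone : Antitone (vanishingIdeal D ε w) :=
  fun _ _ hMN _ ha T hT ↦ ha T (hT.trans_le hMN)

theorem mem_vanishingIdeal_of_derivation_eq_zero {x : A} {k : σ} (hx : ε x = 0)
    (hDx : ∀ l ≠ k, D l x = 0) : x ∈ vanishingIdeal D ε w (w k) := by
  intro T hT
  induction T using List.reverseRecOn with
  | nil => simpa using hx
  | append_singleton T l =>
    have hlk : l ≠ k := by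
      rintro rfl
      simp at hT
    simp [hDx l hlk]

theorem apply_wordDeriv_eq_sum_mul {L : Module.End R A} {μ : σ → R}
    (hLD : ∀ l a, D l (L a) = L (D l a) + μ l • D l a) (hεL : ∀ a, ε (L a) = 0)
    (T : List σ) (a : A) :
    ε (wordDeriv D T (L a)) = (T.map μ).sum * ε (wordDeriv D T a) := by
  induction T using List.reverseRecOn generalizing a with
  | nil => simp [hεL]
  | append_singleton T l ih => simp [hLD, ih, add_mul]

theorem apply_wordDeriv_eq_zero_of_add_sum_eq_zero [NoZeroDivisors R] {ι : Type*} [Fintype ι]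
    {L : Module.End R A} {μ : σ → R} (hLD : ∀ l a, D l (L a) = L (D l a) + μ l • D l a)
    (hεL : ∀ a, ε (L a) = 0) (hμ : ∀ T : List σ, 0 < (T.map w).sum → (T.map μ).sum ≠ 0)
    {e : ι → σ} (he : ∀ j, 0 < w (e j)) {c : ι → A}
    (hc : ∀ j, c j ∈ vanishingIdeal D ε w (w (e j) + 1)) {f : A}
    (hf : L f + ∑ j, c j * D (e j) f = 0) (T : List σ) (hT : 0 < (T.map w).sum) :
    ε (wordDeriv D T f) = 0 := by
  induction hN : (T.map w).sum using Nat.strong_induction_on generalizing T with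
  | _ N ih =>
    subst hN
    have hDf (j : ι) : D (e j) f ∈ vanishingIdeal D ε w ((T.map w).sum - w (e j)) := by
      intro S hS
      have hSj : ((S ++ [e j]).map w).sum = (S.map w).sum + w (e j) := by simp
      have hj := he j
      simpa using ih _ (by omega) (S ++ [e j]) (by omega) rfl
    have hcDf (j : ι) : ε (wordDeriv D T (c j * D (e j) f)) = 0 :=
      mul_mem_vanishingIdeal_add (hc j) (hDf j) T (by omega)
    have hsum := congrArg (fun a ↦ ε (wordDeriv D T a)) hf
    simp only [map_add, map_sum, hcDf, Finset.sum_const_zero, add_zero, map_zero,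
      apply_wordDeriv_eq_sum_mul hLD hεL] at hsum
    exact (mul_eq_zero.mp hsum).resolve_left (hμ T hT)

theorem apply_iterate_eq_zero_of_mem_span {δ : Derivation R A A}
    (hδ : δ ∈ Submodule.span R (Set.range D)) {a : A} (ha : ∀ T, ε (wordDeriv D T a) = 0)
    (k : ℕ) : ε (δ^[k] a) = 0 := by
  have stable {b : A} (hb : ∀ T, ε (wordDeriv D T b) = 0) (T : List σ) :
      ε (wordDeriv D T (δ b)) = 0 := by
    induction hδ using Submodule.span_induction with
    | mem _ h =>
      obtain ⟨l, rfl⟩ := h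
      simpa using hb (T ++ [l])
    | zero => simp
    | add _ _ _ _ h h' => simp [h, h']
    | smul c _ _ h => simp [h]
  suffices ∀ T, ε (wordDeriv D T (δ^[k] a)) = 0 by simpa using this []
  induction k with
  | zero => exact ha
  | succ k ih =>
    rw [Function.iterate_succ_apply']
    exact stable ih

end WordDerivative

section AnalyticAlgebra

open TopologicalSpace Filter Topology

variable {𝕜 E R : Type*} [NontriviallyNormedField 𝕜] [NormedAddCommGroup E] [NormedSpace 𝕜 E]
  [NormedCommRing R] [NormedAlgebra 𝕜 R] {U : Opens E}

variable (𝕜 R U) in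
/-- The algebra of functions that are analytic on the open set `U`. Its elements are functions on
the whole space, unconstrained outside `U`. -/
def analyticSubalgebra : Subalgebra R (E → R) where
  carrier := {f | AnalyticOnNhd 𝕜 f U}
  mul_mem' hf hg := hf.mul hg
  add_mem' hf hg := hf.add hg
  algebraMap_mem' _ := analyticOnNhd_const

variable (𝕜 R U) in
/-- Evaluation at the point `x`, as a character of the algebra of functions analytic on `U`. -/
def evalAt (x : E) : analyticSubalgebra 𝕜 R U →ₐ[R] R :=
  (Pi.evalAlgHom R (fun _ ↦ R) x).comp (analyticSubalgebra 𝕜 R U).val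

@[simp]
theorem evalAt_apply (x : E) (f : analyticSubalgebra 𝕜 R U) :
    evalAt 𝕜 R U x f = (f : E → R) x :=
  rfl

theorem differentiableAt_coe (f : analyticSubalgebra 𝕜 R U) {x : E} (hx : x ∈ U) :
    DifferentiableAt 𝕜 (f : E → R) x :=
  (f.2 x hx).differentiableAt

theorem indicator_eventuallyEq (f : E → R) {x : E} (hx : x ∈ U) :
    (U : Set E).indicator f =ᶠ[𝓝 x] f :=
  (Set.eqOn_indicator (s := (U : Set E))).eventuallyEq_of_mem (U.isOpen.mem_nhds hx)

variable (𝕜 R U) in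
/-- Directional derivative, as a derivation of the functions analytic on `U`. The derivative is
replaced by zero outside `U` so that the Leibniz rule holds everywhere. -/
noncomputable def dirDeriv (v : E) :
    Derivation R (analyticSubalgebra 𝕜 R U) (analyticSubalgebra 𝕜 R U) :=
  Derivation.mk'
    { toFun f := ⟨(U : Set E).indicator fun x ↦ fderiv 𝕜 f x v, fun x hx ↦
        (((ContinuousLinearMap.apply 𝕜 R v).analyticAt _).comp
          (f.2.fderiv_of_isOpen U.isOpen x hx)).congr (indicator_eventuallyEq _ hx).symm⟩
      map_add' f g := by
        ext x
        by_cases hx : x ∈ U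
        · simp [hx, fderiv_add (differentiableAt_coe f hx) (differentiableAt_coe g hx)]
        · simp [hx]
      map_smul' c f := by
        ext x
        by_cases hx : x ∈ U
        · simp [hx, fderiv_const_smul (differentiableAt_coe f hx) c]
        · simp [hx] }
    fun f g ↦ by
      ext x
      by_cases hx : x ∈ U
      · simp [hx, fderiv_mul (differentiableAt_coe f hx) (differentiableAt_coe g hx)]
      · simp [hx]

theorem coe_dirDeriv (v : E) (f : analyticSubalgebra 𝕜 R U) :
    (dirDeriv 𝕜 R U v f : E → R) = (U : Set E).indicator fun x ↦ fderiv 𝕜 f x v :=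
  rfl

theorem dirDeriv_apply_of_mem (v : E) (f : analyticSubalgebra 𝕜 R U) {x : E} (hx : x ∈ U) :
    (dirDeriv 𝕜 R U v f : E → R) x = fderiv 𝕜 f x v := by
  simp [coe_dirDeriv, hx]

theorem dirDeriv_add (v v' : E) :
    dirDeriv 𝕜 R U (v + v') = dirDeriv 𝕜 R U v + dirDeriv 𝕜 R U v' := by
  ext f x
  by_cases hx : x ∈ U <;> simp [coe_dirDeriv, hx]

theorem dirDeriv_smul (c : 𝕜) (v : E) :
    dirDeriv 𝕜 R U (c • v) = algebraMap 𝕜 R c • dirDeriv 𝕜 R U v := by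
  ext f x
  by_cases hx : x ∈ U <;> simp [coe_dirDeriv, hx, Algebra.smul_def]

theorem dirDeriv_comm (v v' : E) (f : analyticSubalgebra 𝕜 R U) :
    dirDeriv 𝕜 R U v (dirDeriv 𝕜 R U v' f) = dirDeriv 𝕜 R U v' (dirDeriv 𝕜 R U v f) := by
  ext x
  by_cases hx : x ∈ U
  · have snd (u u' : E) : (dirDeriv 𝕜 R U u (dirDeriv 𝕜 R U u' f) : E → R) x =
        fderiv 𝕜 (fderiv 𝕜 f) x u u' := by
      have hf' : DifferentiableAt 𝕜 (fderiv 𝕜 (f : E → R)) x :=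
        (f.2.fderiv_of_isOpen U.isOpen x hx).differentiableAt
      rw [dirDeriv_apply_of_mem _ _ hx, coe_dirDeriv, (indicator_eventuallyEq _ hx).fderiv_eq,
        fderiv_clm_apply hf' (differentiableAt_const u')]
      simp
    have hsymm : IsSymmSndFDerivAt 𝕜 (f : E → R) x :=
      (f.2.contDiffOn U.isOpen.uniqueDiffOn).contDiffAt (U.isOpen.mem_nhds hx)
        |>.isSymmSndFDerivAt_of_omega
    rw [snd, snd, hsymm.eq v v']
  · simp [coe_dirDeriv, hx]

theorem iterate_dirDeriv_apply (f : analyticSubalgebra 𝕜 R U) (v : E) (k : ℕ) {x : E}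
    (hx : x ∈ U) :
    ((dirDeriv 𝕜 R U v)^[k] f : E → R) x = iteratedFDeriv 𝕜 k f x fun _ ↦ v := by
  induction k generalizing x with
  | zero => simp
  | succ k ih =>
    have hdiff : DifferentiableAt 𝕜 (iteratedFDeriv 𝕜 k (f : E → R)) x :=
      (f.2.iteratedFDeriv_of_isOpen U.isOpen k x hx).differentiableAt
    have hev : ((dirDeriv 𝕜 R U v)^[k] f : E → R) =ᶠ[𝓝 x]
        fun y ↦ iteratedFDeriv 𝕜 k f y fun _ ↦ v :=
      (U.isOpen.eventually_mem hx).mono fun y hy ↦ ih hy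
    rw [Function.iterate_succ_apply', dirDeriv_apply_of_mem _ _ hx, hev.fderiv_eq,
      hdiff.iteratedFDeriv_succ_apply_left']
    rfl

theorem eqOn_zero_of_iterate_dirDeriv_eq_zero [CharZero 𝕜] [CompleteSpace R]
    (hU : IsPreconnected (U : Set E)) {f : analyticSubalgebra 𝕜 R U} {x : E} (hx : x ∈ U)
    (hf : ∀ (v : E) (k : ℕ), ((dirDeriv 𝕜 R U v)^[k] f : E → R) x = 0) :
    Set.EqOn (f : E → R) 0 U := by
  obtain ⟨p, r, hp⟩ := f.2 x hx
  refine f.2.eqOn_zero_of_preconnected_of_eventuallyEq_zero hU hx ?_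
  filter_upwards [eball_mem_nhds x hp.r_pos] with y hy
  have htaylor := hp.hasSum_iteratedFDeriv (y := y - x)
    (by simpa [edist_eq_enorm_sub] using hy)
  simp only [← iterate_dirDeriv_apply f _ _ hx, hf, smul_zero, add_sub_cancel] at htaylor
  exact htaylor.unique hasSum_zero

end AnalyticAlgebra

section Wirtinger

open TopologicalSpace ComplexConjugate

open Complex (I)

variable {E : Type*} [NormedAddCommGroup E] [NormedSpace ℝ E] [NormedSpace ℂ E]
  [IsScalarTower ℝ ℂ E] {U : Opens E}

theorem dirDeriv_complex_smul (c : ℂ) (v : E) :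
    dirDeriv ℝ ℂ U (c • v) =
      (c.re : ℂ) • dirDeriv ℝ ℂ U v + (c.im : ℂ) • dirDeriv ℝ ℂ U (I • v) := by
  have hcv : c • v = c.re • v + c.im • I • v := by
    rw [← algebraMap_smul ℂ c.re, ← algebraMap_smul ℂ c.im, smul_smul, ← add_smul,
      Complex.coe_algebraMap, Complex.re_add_im]
  rw [hcv, dirDeriv_add, dirDeriv_smul, dirDeriv_smul, Complex.coe_algebraMap]

variable (U) in
/-- The Wirtinger derivative `∂/∂v` in the direction `v`, as a derivation of the functions that are
real-analytic on `U`. -/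
noncomputable def wirtinger :
    E →ₗ[ℂ] Derivation ℂ (analyticSubalgebra ℝ ℂ U) (analyticSubalgebra ℝ ℂ U) where
  toFun v := (1 / 2 : ℂ) • (dirDeriv ℝ ℂ U v - I • dirDeriv ℝ ℂ U (I • v))
  map_add' v v' := by
    simp only [smul_add, dirDeriv_add]
    module
  map_smul' c v := by
    rw [smul_comm I c v, dirDeriv_complex_smul c v, dirDeriv_complex_smul c (I • v), smul_smul I I,
      dirDeriv_complex_smul (I * I)]
    match_scalars <;> apply Complex.ext <;> simp [mul_comm]

variable (U) in
/-- The conjugate Wirtinger derivative `∂/∂v̄` in the direction `v`, as a derivation of the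
functions that are real-analytic on `U`. -/
noncomputable def wirtingerConj :
    E →ₗ⋆[ℂ] Derivation ℂ (analyticSubalgebra ℝ ℂ U) (analyticSubalgebra ℝ ℂ U) where
  toFun v := (1 / 2 : ℂ) • (dirDeriv ℝ ℂ U v + I • dirDeriv ℝ ℂ U (I • v))
  map_add' v v' := by
    simp only [smul_add, dirDeriv_add]
    module
  map_smul' c v := by
    rw [smul_comm I c v, dirDeriv_complex_smul c v, dirDeriv_complex_smul c (I • v), smul_smul I I,
      dirDeriv_complex_smul (I * I)]
    match_scalars <;> apply Complex.ext <;> simp [mul_comm]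

theorem wirtinger_apply (v : E) :
    wirtinger U v = (1 / 2 : ℂ) • (dirDeriv ℝ ℂ U v - I • dirDeriv ℝ ℂ U (I • v)) :=
  rfl

theorem wirtingerConj_apply (v : E) :
    wirtingerConj U v = (1 / 2 : ℂ) • (dirDeriv ℝ ℂ U v + I • dirDeriv ℝ ℂ U (I • v)) :=
  rfl

theorem wirtinger_add_wirtingerConj (v : E) :
    wirtinger U v + wirtingerConj U v = dirDeriv ℝ ℂ U v := by
  rw [wirtinger_apply, wirtingerConj_apply]
  module

theorem wirtinger_comm (v v' : E) (f : analyticSubalgebra ℝ ℂ U) :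
    wirtinger U v (wirtinger U v' f) = wirtinger U v' (wirtinger U v f) := by
  simp only [wirtinger_apply, Derivation.smul_apply, Derivation.sub_apply, Derivation.map_smul,
    map_sub, dirDeriv_comm v, dirDeriv_comm (I • v)]
  module

theorem wirtinger_wirtingerConj_comm (v v' : E) (f : analyticSubalgebra ℝ ℂ U) :
    wirtinger U v (wirtingerConj U v' f) = wirtingerConj U v' (wirtinger U v f) := by
  simp only [wirtinger_apply, wirtingerConj_apply, Derivation.smul_apply, Derivation.sub_apply,
    Derivation.add_apply, Derivation.map_smul, map_sub, map_add, dirDeriv_comm v,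
    dirDeriv_comm (I • v)]
  module

theorem wirtingerConj_comm (v v' : E) (f : analyticSubalgebra ℝ ℂ U) :
    wirtingerConj U v (wirtingerConj U v' f) = wirtingerConj U v' (wirtingerConj U v f) := by
  simp only [wirtingerConj_apply, Derivation.smul_apply, Derivation.add_apply, Derivation.map_smul,
    map_add, dirDeriv_comm v, dirDeriv_comm (I • v)]
  module

theorem differentiableAt_of_wirtingerConj_eq_zero {f : analyticSubalgebra ℝ ℂ U} {x : E}
    (hx : x ∈ U) (hf : ∀ v, (wirtingerConj U v f : E → ℂ) x = 0) :
    DifferentiableAt ℂ (f : E → ℂ) x := by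
  have hfderiv (v : E) : fderiv ℝ f x v = (wirtinger U v f : E → ℂ) x := by
    rw [← dirDeriv_apply_of_mem v f hx, ← wirtinger_add_wirtingerConj]
    simp [hf]
  rw [differentiableAt_iff_restrictScalars ℝ (differentiableAt_coe f hx)]
  refine ⟨{ fderiv ℝ (f : E → ℂ) x with map_smul' c v := ?_ }, rfl⟩
  simp [hfderiv]

end Wirtinger

section Coordinates

open TopologicalSpace ComplexConjugate MvPolynomial

theorem derivation_sum_apply {R A M κ : Type*} [CommSemiring R] [CommSemiring A] [AddCommMonoid M]
    [Algebra R A] [Module A M] [Module R M] (s : Finset κ) (D : κ → Derivation R A M) (a : A) :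
    (∑ k ∈ s, D k) a = ∑ k ∈ s, D k a := by
  rw [← Derivation.coeFnAddMonoidHom_apply, map_sum, Finset.sum_apply]
  rfl

variable {ι : Type*} [Fintype ι] {U : Opens (EuclideanSpace ℂ ι)}

variable (U) in
/-- The polynomial `p`, evaluated at `z` and conjugated, as a real-analytic function of `z`. -/
noncomputable def conjEval : MvPolynomial ι ℂ →+* analyticSubalgebra ℝ ℂ U :=
  eval₂Hom ((algebraMap ℂ _).comp (starRingEnd ℂ)) fun i ↦
    ⟨fun z ↦ conj (z i), (Complex.conjCLE.toContinuousLinearMap.comp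
      ((EuclideanSpace.proj i).restrictScalars ℝ)).analyticOnNhd _⟩

theorem conjEval_apply (p : MvPolynomial ι ℂ) (z : EuclideanSpace ℂ ι) :
    (conjEval U p : EuclideanSpace ℂ ι → ℂ) z = conj (eval (fun i ↦ z i) p) := by
  have hX (i : ι) : (conjEval U (X i) : EuclideanSpace ℂ ι → ℂ) z = conj (z i) := by
    simp [conjEval]
  induction p using MvPolynomial.induction_on with
  | C a => simp [conjEval]
  | add p q hp hq => simp [hp, hq]
  | mul_X p i hp => simp [hp, hX]

theorem coe_dirDeriv_conjEval_X (v : EuclideanSpace ℂ ι) (i : ι) :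
    (dirDeriv ℝ ℂ U v (conjEval U (X i)) : EuclideanSpace ℂ ι → ℂ) =
      (U : Set (EuclideanSpace ℂ ι)).indicator fun _ ↦ conj (v i) := by
  have hX : (conjEval U (X i) : EuclideanSpace ℂ ι → ℂ) =
      Complex.conjCLE.toContinuousLinearMap.comp
        ((EuclideanSpace.proj i : EuclideanSpace ℂ ι →L[ℂ] ℂ).restrictScalars ℝ) := by
    ext z
    simp [conjEval_apply]
  rw [coe_dirDeriv, hX]
  simp

theorem wirtinger_conjEval_X (v : EuclideanSpace ℂ ι) (i : ι) :
    wirtinger U v (conjEval U (X i)) = 0 := by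
  ext z
  by_cases hz : z ∈ U <;> simp [wirtinger_apply, coe_dirDeriv_conjEval_X, hz, ← mul_assoc]

theorem coe_wirtingerConj_conjEval_X (v : EuclideanSpace ℂ ι) (i : ι) :
    (wirtingerConj U v (conjEval U (X i)) : EuclideanSpace ℂ ι → ℂ) =
      (U : Set (EuclideanSpace ℂ ι)).indicator fun _ ↦ conj (v i) := by
  ext z
  by_cases hz : z ∈ U
  · simp [wirtingerConj_apply, coe_dirDeriv_conjEval_X, hz, ← mul_assoc, ← two_mul]
  · simp [wirtingerConj_apply, coe_dirDeriv_conjEval_X, hz]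

theorem wirtingerConj_conjEval_X_mul (v v' : EuclideanSpace ℂ ι) (i : ι)
    (f : analyticSubalgebra ℝ ℂ U) :
    wirtingerConj U v (conjEval U (X i)) * wirtingerConj U v' f =
      conj (v i) • wirtingerConj U v' f := by
  ext z
  by_cases hz : z ∈ U
  · simp [coe_wirtingerConj_conjEval_X, hz]
  · simp [wirtingerConj_apply, coe_dirDeriv, hz]

variable [DecidableEq ι]

variable (U) in
/-- The coordinate Wirtinger derivatives: `∂/∂z j` for the letter `inl j` and `∂/∂z̄ j` for the
letter `inr j`. -/
noncomputable def coordDeriv :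
    ι ⊕ ι → Derivation ℂ (analyticSubalgebra ℝ ℂ U) (analyticSubalgebra ℝ ℂ U) :=
  Sum.elim (fun j ↦ wirtinger U (EuclideanSpace.single j 1))
    fun j ↦ wirtingerConj U (EuclideanSpace.single j 1)

theorem coordDeriv_inr_apply_of_mem (j : ι) (f : analyticSubalgebra ℝ ℂ U)
    {z : EuclideanSpace ℂ ι} (hz : z ∈ U) :
    (coordDeriv U (.inr j) f : EuclideanSpace ℂ ι → ℂ) z =
      (1 / 2 : ℂ) * (fderiv ℝ f z (EuclideanSpace.single j 1) +
        Complex.I * fderiv ℝ f z (Complex.I • EuclideanSpace.single j 1)) := by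
  simp [coordDeriv, wirtingerConj_apply, dirDeriv_apply_of_mem _ _ hz, mul_add]

theorem coordDeriv_inr_apply_of_notMem (j : ι) (f : analyticSubalgebra ℝ ℂ U)
    {z : EuclideanSpace ℂ ι} (hz : z ∉ U) :
    (coordDeriv U (.inr j) f : EuclideanSpace ℂ ι → ℂ) z = 0 := by
  simp [coordDeriv, wirtingerConj_apply, coe_dirDeriv, hz]

theorem coordDeriv_comm (l m : ι ⊕ ι) (f : analyticSubalgebra ℝ ℂ U) :
    coordDeriv U l (coordDeriv U m f) = coordDeriv U m (coordDeriv U l f) := by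
  rcases l with i | i <;> rcases m with j | j
  · exact wirtinger_comm _ _ f
  · exact wirtinger_wirtingerConj_comm _ _ f
  · exact (wirtinger_wirtingerConj_comm _ _ f).symm
  · exact wirtingerConj_comm _ _ f

theorem sum_smul_single (v : EuclideanSpace ℂ ι) :
    ∑ j, v j • EuclideanSpace.single j (1 : ℂ) = v := by
  simpa using (EuclideanSpace.basisFun ι ℂ).sum_repr v

theorem wirtingerConj_eq_sum (v : EuclideanSpace ℂ ι) :
    wirtingerConj U v = ∑ j, conj (v j) • coordDeriv U (.inr j) := by
  conv_lhs => rw [← sum_smul_single v]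
  simp [coordDeriv]

theorem dirDeriv_mem_span_coordDeriv (v : EuclideanSpace ℂ ι) :
    dirDeriv ℝ ℂ U v ∈ Submodule.span ℂ (Set.range (coordDeriv U)) := by
  have hmem (l : ι ⊕ ι) : coordDeriv U l ∈ Submodule.span ℂ (Set.range (coordDeriv U)) :=
    Submodule.subset_span ⟨l, rfl⟩
  have hv : wirtinger U v = ∑ j, v j • coordDeriv U (.inl j) := by
    conv_lhs => rw [← sum_smul_single v]
    simp [coordDeriv]
  rw [← wirtinger_add_wirtingerConj, hv, wirtingerConj_eq_sum]
  exact add_mem (sum_mem fun j _ ↦ Submodule.smul_mem _ _ (hmem _))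
    (sum_mem fun j _ ↦ Submodule.smul_mem _ _ (hmem _))

theorem coordDeriv_conjEval_X_of_ne {l : ι ⊕ ι} {i : ι} (hl : l ≠ .inr i) :
    coordDeriv U l (conjEval U (X i)) = 0 := by
  rcases l with j | j
  · exact wirtinger_conjEval_X _ i
  · ext z
    have hij : i ≠ j := fun h ↦ hl (h ▸ rfl)
    simp [coordDeriv, coe_wirtingerConj_conjEval_X, hij]

theorem coordDeriv_conjEval_X_mul (l : ι ⊕ ι) (i : ι) (f : analyticSubalgebra ℝ ℂ U) :
    coordDeriv U l (conjEval U (X i)) * coordDeriv U (.inr i) f =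
      if l = .inr i then coordDeriv U l f else 0 := by
  split_ifs with hl
  · subst hl
    simp [coordDeriv, wirtingerConj_conjEval_X_mul]
  · simp [coordDeriv_conjEval_X_of_ne hl]

variable (U) in
/-- The diagonal vector field `∑ j, conj (lam j) * z̄ j * ∂/∂z̄ j`. -/
noncomputable def conjEuler (lam : ι → ℂ) :
    Derivation ℂ (analyticSubalgebra ℝ ℂ U) (analyticSubalgebra ℝ ℂ U) :=
  ∑ j, conj (lam j) • conjEval U (X j) • coordDeriv U (.inr j)

theorem conjEuler_apply (lam : ι → ℂ) (f : analyticSubalgebra ℝ ℂ U) :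
    conjEuler U lam f = ∑ j, conj (lam j) • (conjEval U (X j) * coordDeriv U (.inr j) f) := by
  simp [conjEuler, derivation_sum_apply]

theorem coordDeriv_conjEuler (lam : ι → ℂ) (l : ι ⊕ ι) (f : analyticSubalgebra ℝ ℂ U) :
    coordDeriv U l (conjEuler U lam f) = conjEuler U lam (coordDeriv U l f) +
      Sum.elim (0 : ι → ℂ) (fun j ↦ conj (lam j)) l • coordDeriv U l f := by
  have hterm (j : ι) : coordDeriv U l (conjEval U (X j) * coordDeriv U (.inr j) f) =
      conjEval U (X j) * coordDeriv U (.inr j) (coordDeriv U l f) +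
        if l = .inr j then coordDeriv U l f else 0 := by
    rw [Derivation.leibniz, smul_eq_mul, smul_eq_mul, mul_comm (coordDeriv U _ f),
      coordDeriv_conjEval_X_mul, coordDeriv_comm]
  simp only [conjEuler_apply, map_sum, Derivation.map_smul, hterm, smul_add,
    Finset.sum_add_distrib]
  rcases l with i | i <;> simp

theorem evalAt_zero_conjEuler (lam : ι → ℂ) (f : analyticSubalgebra ℝ ℂ U) :
    evalAt ℝ ℂ U 0 (conjEuler U lam f) = 0 := by
  simp [conjEuler_apply, conjEval_apply]

theorem conjEuler_add_sum_eq_zero {lam : ι → ℂ} {g : ι → MvPolynomial ι ℂ}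
    {f : analyticSubalgebra ℝ ℂ U}
    (hf : ∀ z ∈ U, ∑ j, conj (lam j * z j + eval (fun i ↦ z i) (g j)) *
      (coordDeriv U (.inr j) f : EuclideanSpace ℂ ι → ℂ) z = 0) :
    conjEuler U lam f + ∑ j, conjEval U (g j) * coordDeriv U (.inr j) f = 0 := by
  ext z
  by_cases hz : z ∈ U
  · simpa [conjEuler_apply, conjEval_apply, add_mul, mul_assoc, Finset.sum_add_distrib]
      using hf z hz
  · simp [conjEuler_apply, coordDeriv_inr_apply_of_notMem _ _ hz]

theorem eqOn_zero_of_wordDeriv_coordDeriv_eq_zero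
    (hU : IsPreconnected (U : Set (EuclideanSpace ℂ ι))) {x : EuclideanSpace ℂ ι} (hx : x ∈ U)
    {f : analyticSubalgebra ℝ ℂ U}
    (hf : ∀ T, evalAt ℝ ℂ U x (wordDeriv (coordDeriv U) T f) = 0) :
    Set.EqOn (f : EuclideanSpace ℂ ι → ℂ) 0 U :=
  eqOn_zero_of_iterate_dirDeriv_eq_zero hU hx fun v ↦
    apply_iterate_eq_zero_of_mem_span (dirDeriv_mem_span_coordDeriv v) hf

theorem differentiableOn_of_coordDeriv_inr_eqOn_zero {f : analyticSubalgebra ℝ ℂ U}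
    (hf : ∀ j, Set.EqOn (coordDeriv U (.inr j) f : EuclideanSpace ℂ ι → ℂ) 0 U) :
    DifferentiableOn ℂ (f : EuclideanSpace ℂ ι → ℂ) U := by
  refine fun z hz ↦
    (differentiableAt_of_wirtingerConj_eq_zero hz fun v ↦ ?_).differentiableWithinAt
  have hfz (j : ι) : (coordDeriv U (.inr j) f : EuclideanSpace ℂ ι → ℂ) z = 0 := hf j hz
  simp [wirtingerConj_eq_sum, derivation_sum_apply, hfz]

end Coordinates

section Triangular

open TopologicalSpace ComplexConjugate MvPolynomial

theorem mem_span_X_image_of_vars {σ R : Type*} [CommSemiring R] {p : MvPolynomial σ R} {s : Set σ}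
    (hp : ∀ i ∈ p.vars, i ∈ s) (hp0 : coeff 0 p = 0) :
    p ∈ Ideal.span (X '' s : Set (MvPolynomial σ R)) := by
  rw [mem_ideal_span_X_image]
  intro m hm
  have hm0 : m ≠ 0 := by
    rintro rfl
    exact mem_support_iff.mp hm hp0
  obtain ⟨i, hi⟩ := Finsupp.ne_iff.mp hm0
  exact ⟨i, hp i (mem_vars_iff_mem_support i |>.mpr ⟨m, hm, Finsupp.mem_support_iff.mpr hi⟩), hi⟩

variable {ι : Type*} [Preorder ι]

/-- Weights of the letters `∂/∂z j` and `∂/∂z̄ j`. Earlier conjugate variables are heavier, so that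
the conjugate of a polynomial in the variables before `j` without constant term vanishes at the
origin to weighted order exceeding the weight of `z̄ j`. -/
noncomputable def coordWeight : ι ⊕ ι → ℕ :=
  Sum.elim 0 fun j ↦ (Set.Ici j).ncard

theorem coordWeight_inr_pos [Finite ι] (j : ι) : 0 < coordWeight (.inr j) :=
  (Set.ncard_pos).mpr ⟨j, le_rfl⟩

theorem coordWeight_inr_lt_of_lt [Finite ι] {i j : ι} (hij : i < j) :
    coordWeight (.inr j) < coordWeight (.inr i) :=
  Set.ncard_lt_ncard (Set.Ici_ssubset_Ici.mpr hij)

theorem sum_map_conj_ne_zero {lam : ι → ℂ} (hlam : ∀ j, 0 < (lam j).re) {T : List (ι ⊕ ι)}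
    (hT : 0 < (T.map coordWeight).sum) :
    (T.map (Sum.elim (0 : ι → ℂ) fun j ↦ conj (lam j))).sum ≠ 0 := by
  set μ : ι ⊕ ι → ℂ := Sum.elim 0 fun j ↦ conj (lam j)
  have hμ (l : ι ⊕ ι) : 0 ≤ (μ l).re := by
    rcases l with _ | j
    · exact le_rfl
    · exact (hlam j).le
  obtain ⟨j, hj⟩ : ∃ j, .inr j ∈ T := by
    contrapose! hT
    refine (List.sum_eq_zero ?_).le
    simp only [List.mem_map]
    rintro _ ⟨i | i, hi, rfl⟩
    · rfl
    · exact absurd hi (hT i)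
  have hpos : 0 < (T.map fun l ↦ (μ l).re).sum :=
    (hlam j).trans_le <| List.single_le_sum (List.forall_mem_map.mpr fun l _ ↦ hμ l) _
      (List.mem_map_of_mem hj)
  intro hzero
  have hre : (T.map fun l ↦ (μ l).re).sum = (T.map μ).sum.re := by
    simpa [Function.comp_def] using (map_list_sum Complex.reAddGroupHom (T.map μ)).symm
  simp [hre, hzero] at hpos

variable [Fintype ι] [DecidableEq ι] {U : Opens (EuclideanSpace ℂ ι)}

theorem conjEval_mem_vanishingIdeal {p : MvPolynomial ι ℂ} {j : ι} (hp : ∀ i ∈ p.vars, i < j)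
    (hp0 : coeff 0 p = 0) :
    conjEval U p ∈ vanishingIdeal (coordDeriv U) (evalAt ℝ ℂ U 0) coordWeight
      (coordWeight (.inr j) + 1) := by
  have hle : Ideal.span (X '' Set.Iio j) ≤ (vanishingIdeal (coordDeriv U) (evalAt ℝ ℂ U 0)
      coordWeight (coordWeight (.inr j) + 1)).comap (conjEval U) := by
    rw [Ideal.span_le]
    rintro _ ⟨i, hij, rfl⟩
    exact vanishingIdeal_antitone (coordWeight_inr_lt_of_lt hij)
      (mem_vanishingIdeal_of_derivation_eq_zero (by simp [conjEval_apply])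
        fun l hl ↦ coordDeriv_conjEval_X_of_ne hl)
  exact hle (mem_span_X_image_of_vars hp hp0)

theorem coordDeriv_inr_eqOn_zero {lam : ι → ℂ} (hlam : ∀ j, 0 < (lam j).re)
    {g : ι → MvPolynomial ι ℂ} (hgvars : ∀ j, ∀ i ∈ (g j).vars, i < j)
    (hg0 : ∀ j, coeff 0 (g j) = 0) (hU : IsPreconnected (U : Set (EuclideanSpace ℂ ι)))
    (h0 : 0 ∈ U) {f : analyticSubalgebra ℝ ℂ U}
    (hf : conjEuler U lam f + ∑ j, conjEval U (g j) * coordDeriv U (.inr j) f = 0) (j : ι) :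
    Set.EqOn (coordDeriv U (.inr j) f : EuclideanSpace ℂ ι → ℂ) 0 U := by
  refine eqOn_zero_of_wordDeriv_coordDeriv_eq_zero hU h0 fun T ↦ ?_
  have hT : 0 < ((T ++ [Sum.inr j]).map coordWeight).sum := by
    simp [coordWeight_inr_pos]
  have h := apply_wordDeriv_eq_zero_of_add_sum_eq_zero (L := (conjEuler U lam).toLinearMap)
    (coordDeriv_conjEuler lam) (evalAt_zero_conjEuler lam)
    (fun _ ↦ sum_map_conj_ne_zero hlam) coordWeight_inr_pos
    (fun j ↦ conjEval_mem_vanishingIdeal (hgvars j) (hg0 j)) hf _ hT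
  rwa [wordDeriv_append_singleton_apply] at h

end Triangular

end Forelli

open Forelli in
theorem forelli_real_analytic_general {ι : Type*} [Fintype ι] [DecidableEq ι] [Preorder ι]
    (lam : ι → ℂ) (hlam : ∀ j, 0 < (lam j).re) (g : ι → MvPolynomial ι ℂ)
    (hgvars : ∀ j, ∀ i ∈ (g j).vars, i < j) (hg0 : ∀ j, MvPolynomial.coeff 0 (g j) = 0)
    {U : Set (EuclideanSpace ℂ ι)} (hUo : IsOpen U) (hUc : IsPreconnected U) (h0 : 0 ∈ U)
    {f : EuclideanSpace ℂ ι → ℂ} (hf : AnalyticOnNhd ℝ f U)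
    (hX : ∀ z ∈ U, ∑ j, (starRingEnd ℂ) (lam j * z j + MvPolynomial.eval (fun i ↦ z i) (g j)) *
      ((1 / 2 : ℂ) * (fderiv ℝ f z (EuclideanSpace.single j 1) +
        Complex.I * fderiv ℝ f z (Complex.I • EuclideanSpace.single j 1))) = 0) :
    DifferentiableOn ℂ f U := by
  let V : TopologicalSpace.Opens (EuclideanSpace ℂ ι) := ⟨U, hUo⟩
  let F : analyticSubalgebra ℝ ℂ V := ⟨f, hf⟩
  have hF : conjEuler V lam F + ∑ j, conjEval V (g j) * coordDeriv V (.inr j) F = 0 := by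
    refine conjEuler_add_sum_eq_zero fun z hz ↦ ?_
    simpa only [coordDeriv_inr_apply_of_mem _ _ hz] using hX z hz
  exact differentiableOn_of_coordDeriv_inr_eqOn_zero
    (coordDeriv_inr_eqOn_zero hlam hgvars hg0 hUc h0 hF)

/-- **Real-analytic version** (Theorem 3.3).  Let
`X = Σ_j (λ_j z_j + g_j(z_1,…,z_{j-1})) ∂/∂z_j` be a holomorphic vector field contracting
at the origin (`Re λ_j > 0`, `g_j` polynomials in the earlier variables with zero constant
term).  If `f` is real-analytic on the unit ball and satisfies `X̄ f = 0`, expressed via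
the Wirtinger derivatives `(∂f/∂z̄_j)(p) = ½(Df(p)(e_j) + i·Df(p)(i·e_j))`, then `f` is
holomorphic. -/
theorem forelli_real_analytic (n : ℕ) (lam : Fin n → ℂ)
    (hlam : ∀ j, 0 < (lam j).re)
    (g : Fin n → MvPolynomial (Fin n) ℂ)
    (hgvars : ∀ j : Fin n, ∀ i ∈ (g j).vars, (i : ℕ) < (j : ℕ))
    (hg0 : ∀ j, MvPolynomial.coeff 0 (g j) = 0)
    (f : EuclideanSpace ℂ (Fin n) → ℂ)
    (hf : AnalyticOnNhd ℝ f (ball (0 : EuclideanSpace ℂ (Fin n)) 1))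
    (hX : ∀ z ∈ ball (0 : EuclideanSpace ℂ (Fin n)) 1,
      ∑ j : Fin n, (starRingEnd ℂ) (lam j * z j + MvPolynomial.eval (fun i => z i) (g j)) *
        ((1 / 2 : ℂ) * (fderiv ℝ f z (EuclideanSpace.single j 1) +
          Complex.I * fderiv ℝ f z (Complex.I • EuclideanSpace.single j 1))) = 0) :
    DifferentiableOn ℂ f (ball (0 : EuclideanSpace ℂ (Fin n)) 1) := by
  exact forelli_real_analytic_general lam hlam g hgvars hg0 isOpen_ball
    (convex_ball 0 1).isPreconnected (mem_ball_self one_pos) hf hX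
end

section
/- Let k be a positive integer and define F : ℂ² → ℂ by F(z₁,z₂) = (conj(z₂)/conj(z₁)) · z₁^{k+2} if z₁ ≠ 0 and F(z₁,z₂) = 0 if z₁ = 0. Then: (a) F is of class C^k on all of ℂ²; (b) for every v ∈ ℂ² the function ζ ↦ F(ζ·v) is holomorphic on all of ℂ; and (c) F is not holomorphic on any nonempty open subset of ℂ² (indeed F is not complex differentiable at any point with z₁ ≠ 0). -/
/-- Forelli's example `F(z₁,z₂) = (z̄₂/z̄₁) z₁^{k+2}` for `z₁ ≠ 0`, `F = 0` for `z₁ = 0`. -/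
noncomputable def forelliExample (k : ℕ) : ℂ × ℂ → ℂ := fun z =>
  if z.1 = 0 then 0
  else ((starRingEnd ℂ) z.2 / (starRingEnd ℂ) z.1) * z.1 ^ (k + 2)

/-! Write `F(z₁, z₂) = z̄₂ · g(z₁)` with `g(w) = w ^ (k + 2) / w̄`. Over the reals `g` is
homogeneous of degree `k + 1` and smooth away from the origin. Such a function is continuous at the
origin if its degree is positive and differentiable there if its degree exceeds `1`; since
differentiation lowers the degree by one, `g` is of class `C^k` by induction. On a complex line the
factors `ζ̄` cancel, which leaves `F(ζ v) = ζ ^ (k + 2) F(v)`. With `z₁ ≠ 0` fixed, `F` is a nonzero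
multiple of `z̄₂`, which is nowhere complex differentiable. -/

open Complex Filter Metric Topology
open scoped ComplexConjugate

theorem tendsto_norm_rpow_nhds_zero {E : Type*} [SeminormedAddCommGroup E] {d : ℝ} (hd : 0 < d) :
    Tendsto (fun x : E ↦ ‖x‖ ^ d) (𝓝 0) (𝓝 0) := by
  have hcont : Continuous fun x : E ↦ ‖x‖ ^ d := continuous_norm.rpow_const fun _ ↦ .inr hd.le
  simpa [Real.zero_rpow hd.ne'] using hcont.tendsto 0

theorem isLittleO_norm_rpow_id {E : Type*} [SeminormedAddCommGroup E] {d : ℝ} (hd : 1 < d) :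
    (fun x : E ↦ ‖x‖ ^ d) =o[𝓝 0] fun x ↦ x := by
  have small : (fun x : E ↦ ‖x‖ ^ (d - 1)) =o[𝓝 0] fun _ ↦ (1 : ℝ) :=
    (Asymptotics.isLittleO_one_iff ℝ).2 (tendsto_norm_rpow_nhds_zero (sub_pos.2 hd))
  refine ((small.mul_isBigO (Asymptotics.isBigO_refl (fun x : E ↦ ‖x‖) (𝓝 0))).congr
    (fun x ↦ ?_) fun x ↦ one_mul _).of_norm_right
  rw [← Real.rpow_add_one' (norm_nonneg x) (by linarith), sub_add_cancel]

section PosHomogeneous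

variable {E F : Type*} [NormedAddCommGroup E] [NormedSpace ℝ E]
  [NormedAddCommGroup F] [NormedSpace ℝ F] {f : E → F} {d : ℝ}

/-- Positive homogeneity of real degree `d`, which controls regularity at the origin. Only scalings
by `t > 0` are considered, so the real power `t ^ d` never takes its junk values. -/
def PosHomogeneous (d : ℝ) (f : E → F) : Prop :=
  ∀ ⦃t : ℝ⦄, 0 < t → ∀ x, f (t • x) = t ^ d • f x

namespace PosHomogeneous

theorem map_zero (hf : PosHomogeneous d f) (hd : d ≠ 0) : f 0 = 0 := by
  have two_rpow_ne_one : (2 : ℝ) ^ d ≠ 1 := by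
    rwa [Ne, ← Real.rpow_zero 2, Real.rpow_right_inj two_pos (by norm_num)]
  have scaled : (2 : ℝ) ^ d • f 0 = (1 : ℝ) • f 0 := by
    simpa using (hf two_pos 0).symm
  by_contra hf0
  exact two_rpow_ne_one (smul_left_injective ℝ hf0 scaled)

theorem fderiv_apply (hf : PosHomogeneous d f) (v : E) :
    PosHomogeneous (d - 1) fun x ↦ fderiv ℝ f x v := by
  intro t ht x
  have scaled : (fun y ↦ f (t • y)) = t ^ d • f := funext (hf ht)
  have chain_rule : t • fderiv ℝ f (t • x) = t ^ d • fderiv ℝ f x := by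
    rw [← fderiv_comp_smul, scaled, fderiv_const_smul_field, Pi.smul_apply]
  have scaled_fderiv : fderiv ℝ f (t • x) = t ^ (d - 1) • fderiv ℝ f x := by
    rw [Real.rpow_sub_one ht.ne', div_eq_inv_mul, mul_smul, ← chain_rule, inv_smul_smul₀ ht.ne']
  exact DFunLike.congr_fun scaled_fderiv v

variable [FiniteDimensional ℝ E]

theorem exists_norm_le_mul_rpow (hf : PosHomogeneous d f) (hd : d ≠ 0)
    (hcont : ContinuousOn f {0}ᶜ) : ∃ C, ∀ x, ‖f x‖ ≤ C * ‖x‖ ^ d := by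
  have sphere_subset : sphere (0 : E) 1 ⊆ {0}ᶜ := fun x hx ↦ ne_of_mem_sphere hx one_ne_zero
  obtain ⟨C, hC⟩ :=
    (isCompact_sphere (0 : E) 1).exists_bound_of_continuousOn (hcont.mono sphere_subset)
  refine ⟨C, fun x ↦ ?_⟩
  rcases eq_or_ne x 0 with rfl | hx
  · simp [hf.map_zero hd, Real.zero_rpow hd]
  have norm_pos : 0 < ‖x‖ := norm_pos_iff.2 hx
  have unit_mem : ‖x‖⁻¹ • x ∈ sphere (0 : E) 1 := by
    simp [norm_smul, norm_pos.ne']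
  calc ‖f x‖ = ‖f (‖x‖ • ‖x‖⁻¹ • x)‖ := by rw [smul_inv_smul₀ norm_pos.ne']
    _ = ‖x‖ ^ d * ‖f (‖x‖⁻¹ • x)‖ := by
      rw [hf norm_pos, norm_smul, Real.norm_of_nonneg (by positivity)]
    _ ≤ ‖x‖ ^ d * C := by gcongr; exact hC _ unit_mem
    _ = C * ‖x‖ ^ d := mul_comm _ _

theorem isBigO_norm_rpow (hf : PosHomogeneous d f) (hd : d ≠ 0)
    (hcont : ContinuousOn f {0}ᶜ) (l : Filter E) : f =O[l] fun x ↦ ‖x‖ ^ d := by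
  obtain ⟨C, hC⟩ := hf.exists_norm_le_mul_rpow hd hcont
  refine .of_bound C (.of_forall fun x ↦ ?_)
  rw [Real.norm_of_nonneg (by positivity)]
  exact hC x

theorem continuous (hf : PosHomogeneous d f) (hd : 0 < d) (hcont : ContinuousOn f {0}ᶜ) :
    Continuous f := by
  refine continuous_iff_continuousAt.2 fun x ↦ ?_
  rcases eq_or_ne x 0 with rfl | hx
  · rw [ContinuousAt, hf.map_zero hd.ne']
    exact (hf.isBigO_norm_rpow hd.ne' hcont _).trans_tendsto (tendsto_norm_rpow_nhds_zero hd)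
  · exact hcont.continuousAt (isOpen_compl_singleton.mem_nhds hx)

theorem differentiable (hf : PosHomogeneous d f) (hd : 1 < d)
    (hdiff : DifferentiableOn ℝ f {0}ᶜ) : Differentiable ℝ f := by
  have d_ne_zero : d ≠ 0 := by linarith
  intro x
  rcases eq_or_ne x 0 with rfl | hx
  · have isLittleO_id : f =o[𝓝 0] fun x ↦ x :=
      (hf.isBigO_norm_rpow d_ne_zero hdiff.continuousOn _).trans_isLittleO
        (isLittleO_norm_rpow_id hd)
    have hasFDerivAt_zero : HasFDerivAt f (0 : E →L[ℝ] F) 0 := by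
      rw [hasFDerivAt_iff_isLittleO_nhds_zero]
      simpa [hf.map_zero d_ne_zero] using isLittleO_id
    exact hasFDerivAt_zero.differentiableAt
  · exact hdiff.differentiableAt (isOpen_compl_singleton.mem_nhds hx)

theorem contDiff {n : ℕ} (hf : PosHomogeneous d f) (hd : n < d)
    (hsmooth : ContDiffOn ℝ n f {0}ᶜ) : ContDiff ℝ n f := by
  induction n generalizing f d with
  | zero =>
    exact contDiff_zero.2 (hf.continuous (mod_cast hd) hsmooth.continuousOn)
  | succ n ih =>
    push_cast at hd hsmooth ⊢
    have fderiv_smooth : ContDiffOn ℝ n (fderiv ℝ f) {0}ᶜ :=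
      hsmooth.fderiv_of_isOpen isOpen_compl_singleton le_rfl
    refine contDiff_succ_iff_fderiv_apply.2
      ⟨hf.differentiable (by linarith [n.cast_nonneg (α := ℝ)])
        (hsmooth.differentiableOn (by simp)), by simp, fun v ↦ ?_⟩
    exact ih (hf.fderiv_apply v) (lt_sub_iff_add_lt.2 hd) (fderiv_smooth.clm_apply contDiffOn_const)

end PosHomogeneous

end PosHomogeneous

theorem posHomogeneous_pow_div_conj_pow (a b : ℕ) :
    PosHomogeneous ((a : ℝ) - b) fun w : ℂ ↦ w ^ a / conj w ^ b := by
  intro t ht w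
  simp only [real_smul, map_mul, conj_ofReal, mul_pow, Real.rpow_sub ht, Real.rpow_natCast,
    ofReal_div, ofReal_pow, mul_div_mul_comm]

theorem contDiff_pow_div_conj_pow {n a b : ℕ} (h : n + b < a) :
    ContDiff ℝ n fun w : ℂ ↦ w ^ a / conj w ^ b := by
  have degree_gt : (n : ℝ) < a - b := lt_sub_iff_add_lt.2 (mod_cast h)
  refine (posHomogeneous_pow_div_conj_pow a b).contDiff degree_gt fun w hw ↦ ?_
  have conj_pow_ne_zero : conj w ^ b ≠ 0 := pow_ne_zero b ((map_ne_zero _).2 hw)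
  have num_smooth : ContDiffAt ℝ n (fun w : ℂ ↦ w ^ a) w := (contDiff_id.pow a).contDiffAt
  have denom_smooth : ContDiffAt ℝ n (fun w : ℂ ↦ conj w ^ b) w :=
    (conjCLE.contDiff.pow b).contDiffAt
  simpa only [div_eq_mul_inv, Pi.inv_apply] using!
    (num_smooth.mul (denom_smooth.inv conj_pow_ne_zero)).contDiffWithinAt

theorem not_differentiableAt_conj (z : ℂ) : ¬ DifferentiableAt ℂ (fun w ↦ conj w) z := by
  intro h
  have fderiv_eq : (fderiv ℂ (fun w ↦ conj w) z).restrictScalars ℝ = conjCLE :=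
    (h.hasFDerivAt.restrictScalars ℝ).unique conjCLE.hasFDerivAt
  have fderiv_apply (v : ℂ) : fderiv ℂ (fun w ↦ conj w) z v = conj v :=
    DFunLike.congr_fun fderiv_eq v
  have neg_I_eq_I : -I = I := by
    simpa [fderiv_apply] using (fderiv ℂ (fun w ↦ conj w) z).map_smul I 1
  exact I_ne_zero (neg_eq_self.1 neg_I_eq_I)

-- No case split is needed: at `z.1 = 0` the quotient is `0 / 0 = 0`.
theorem forelliExample_apply (k : ℕ) (z : ℂ × ℂ) :
    forelliExample k z = conj z.2 * (z.1 ^ (k + 2) / conj z.1) := by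
  by_cases hz : z.1 = 0
  · simp [forelliExample, hz]
  · rw [forelliExample, if_neg hz, div_mul_eq_mul_div, mul_div_assoc]

theorem contDiff_forelliExample (k : ℕ) : ContDiff ℝ k (forelliExample k) := by
  have smooth_snd : ContDiff ℝ k fun z : ℂ × ℂ ↦ conj z.2 := conjCLE.contDiff.comp contDiff_snd
  have smooth_fst : ContDiff ℝ k fun z : ℂ × ℂ ↦ z.1 ^ (k + 2) / conj z.1 ^ 1 :=
    (contDiff_pow_div_conj_pow (by lia)).comp contDiff_fst
  simpa only [pow_one, ← forelliExample_apply] using! smooth_snd.mul smooth_fst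

theorem forelliExample_smul (k : ℕ) (ζ : ℂ) (v : ℂ × ℂ) :
    forelliExample k (ζ • v) = ζ ^ (k + 2) * forelliExample k v := by
  rcases eq_or_ne ζ 0 with rfl | hζ
  · simp [forelliExample]
  have conj_ne_zero : conj ζ ≠ 0 := (map_ne_zero _).2 hζ
  simp only [forelliExample_apply, Prod.smul_fst, Prod.smul_snd, smul_eq_mul, map_mul, mul_pow]
  field_simp

theorem differentiable_forelliExample_smul (k : ℕ) (v : ℂ × ℂ) :
    Differentiable ℂ fun ζ : ℂ ↦ forelliExample k (ζ • v) := by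
  simp only [forelliExample_smul]
  fun_prop

theorem not_differentiableAt_forelliExample (k : ℕ) {z : ℂ × ℂ} (hz : z.1 ≠ 0) :
    ¬ DifferentiableAt ℂ (forelliExample k) z := by
  intro h
  have slice : DifferentiableAt ℂ (fun w ↦ forelliExample k (z.1, w)) z.2 :=
    DifferentiableAt.comp (g := forelliExample k) z.2 h (by fun_prop)
  have coeff_ne_zero : z.1 ^ (k + 2) / conj z.1 ≠ 0 :=
    div_ne_zero (pow_ne_zero _ hz) ((map_ne_zero _).2 hz)
  refine not_differentiableAt_conj z.2 ?_
  simpa only [forelliExample_apply, mul_div_cancel_right₀ _ coeff_ne_zero] using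
    slice.div_const (z.1 ^ (k + 2) / conj z.1)

theorem dense_setOf_fst_ne {X Y : Type*} [TopologicalSpace X] [TopologicalSpace Y] (a : X)
    [NeBot (𝓝[≠] a)] : Dense {z : X × Y | z.1 ≠ a} :=
  (dense_compl_singleton a).preimage isOpenMap_fst

theorem not_differentiableOn_forelliExample (k : ℕ) {U : Set (ℂ × ℂ)} (hU : IsOpen U)
    (hne : U.Nonempty) : ¬ DifferentiableOn ℂ (forelliExample k) U := by
  intro h
  obtain ⟨z, hzU, hz⟩ := (dense_setOf_fst_ne (0 : ℂ)).inter_open_nonempty U hU hne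
  exact not_differentiableAt_forelliExample k hz (h.differentiableAt (hU.mem_nhds hzU))

/-- For a positive integer `k`, the function `F(z₁,z₂) = (z̄₂/z̄₁) z₁^{k+2}` (extended by
`0` on `z₁ = 0`) is (a) of class `C^k` on all of `ℂ²`, (b) holomorphic on all of `ℂ` along
every radial complex line `ζ ↦ ζ·v`, and (c) not holomorphic on any nonempty open subset of
`ℂ²`; indeed it is not complex differentiable at any point with `z₁ ≠ 0`.  Hence the
`C^∞(0)` condition in Forelli's theorem cannot be relaxed to finite differentiability. -/
theorem forelli_finite_smoothness_counterexample (k : ℕ) (hk : 0 < k) :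
    ContDiff ℝ (k : ℕ) (forelliExample k) ∧
    (∀ v : ℂ × ℂ, Differentiable ℂ (fun ζ : ℂ => forelliExample k (ζ • v))) ∧
    (∀ U : Set (ℂ × ℂ), IsOpen U → U.Nonempty →
      ¬ DifferentiableOn ℂ (forelliExample k) U) ∧
    (∀ z : ℂ × ℂ, z.1 ≠ 0 → ¬ DifferentiableAt ℂ (forelliExample k) z) := by
  exact ⟨contDiff_forelliExample k, differentiable_forelliExample_smul k,
    fun _ ↦ not_differentiableOn_forelliExample k,
    fun _ ↦ not_differentiableAt_forelliExample k⟩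
end
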